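/- arXiv:1903.09638 — 5 statements merged into one kernel-verified Lean document; each statement's English description precedes it below -/
import Mathlib

section
/- Let Q ≥ 1 be a real number and n an integer. Then δ(n=0) = 2 Re ∫_0^1 Σ_{1 ≤ q ≤ Q} Σ_{Q < a ≤ q+Q, gcd(a,q)=1} (1/(aq)) · e(n·ā/q − n·x/(aq)) dx, where δ(n=0) equals 1 if n = 0 and 0 otherwise, the sums run over integers q with 1 ≤ q ≤ Q and integers a with Q < a ≤ q + Q coprime to q, and ā denotes any integer with a·ā ≡ 1 (mod q). -/
open Complex Real

noncomputable def e (x : ℝ) : ℂ := Complex.exp (2 * Real.pi * Complex.I * x)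

/-- integral of `cos (2π n t)` on `[u - l, u]`. -/
noncomputable def kD (n : ℤ) (u l : ℝ) : ℝ := ∫ t in (u - l)..u, Real.cos (2 * Real.pi * n * t)

lemma kc_cont (n : ℤ) : Continuous (fun t : ℝ => Real.cos (2 * Real.pi * n * t)) := by
  fun_prop

lemma kc_int (n : ℤ) (a b : ℝ) :
    IntervalIntegrable (fun t : ℝ => Real.cos (2 * Real.pi * n * t)) MeasureTheory.volume a b :=
  (kc_cont n).intervalIntegrable a b

lemma kc_shift (n k : ℤ) (a b : ℝ) :
    (∫ t in (a + k)..(b + k), Real.cos (2 * Real.pi * n * t))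
      = ∫ t in a..b, Real.cos (2 * Real.pi * n * t) := by
  rw [← intervalIntegral.integral_comp_add_right]
  apply intervalIntegral.integral_congr
  intro t _
  have h : 2 * Real.pi * n * (t + k) = 2 * Real.pi * n * t + ((n * k : ℤ) : ℝ) * (2 * Real.pi) := by
    push_cast; ring
  simp only [h, Real.cos_add_int_mul_two_pi]

lemma kc_neg (n : ℤ) (a b : ℝ) :
    (∫ t in (-b)..(-a), Real.cos (2 * Real.pi * n * t))
      = ∫ t in a..b, Real.cos (2 * Real.pi * n * t) := by
  rw [← intervalIntegral.integral_comp_neg]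
  apply intervalIntegral.integral_congr
  intro t _
  simp

lemma kD_congr (n : ℤ) (q A B : ℤ) (hq : 1 ≤ q) (h : q ∣ A - B) (l : ℝ) :
    kD n (A / q) l = kD n (B / q) l := by
  obtain ⟨k, hk⟩ := h
  have hq0 : (q : ℝ) ≠ 0 := by
    have : q ≠ 0 := by omega
    exact_mod_cast this
  have hA : (A : ℝ) = B + q * k := by
    have : A = B + q * k := by linarith
    exact_mod_cast this
  have h1 : (A : ℝ) / q = B / q + k := by rw [hA]; field_simp
  unfold kD
  rw [h1, ← kc_shift n k ((B : ℝ) / q - l)]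
  congr 1
  ring

lemma inv_dvd (inv : ℤ → ℤ → ℤ)
    (hinv : ∀ q a : ℤ, 1 ≤ q → Int.gcd a q = 1 → (a * inv q a) % q = 1 % q)
    (q a A : ℤ) (hq : 1 ≤ q) (h : Int.gcd a q = 1) (hA : q ∣ a * A - 1) :
    q ∣ inv q a - A := by
  have h1 : q ∣ a * inv q a - 1 := 
    Int.dvd_of_emod_eq_zero (Int.emod_eq_emod_iff_emod_sub_eq_zero.mp (hinv q a hq h))
  have h2 : q ∣ a * (inv q a - A) := by
    have h3 : a * (inv q a - A) = (a * inv q a - 1) - (a * A - 1) := by ring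
    rw [h3]
    exact dvd_sub h1 hA
  exact (Int.isCoprime_iff_gcd_eq_one.mpr h).symm.dvd_of_dvd_mul_left h2

/-- mediant identity -/
lemma kD_mediant (inv : ℤ → ℤ → ℤ)
    (hinv : ∀ q a : ℤ, 1 ≤ q → Int.gcd a q = 1 → (a * inv q a) % q = 1 % q)
    (n r M : ℤ) (hr : 1 ≤ r) (hM : 1 ≤ M) (h : Int.gcd M r = 1) :
    kD n (inv r M / r) (1 / (M * r)) =
      kD n (inv r (M + r) / r) (1 / ((M + r : ℤ) * r)) +
      kD n (inv M (M + r) / M) (1 / ((M + r : ℤ) * M)) := by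
  obtain ⟨A, B, hAB⟩ := Int.isCoprime_iff_gcd_eq_one.mpr h
  have g1 : Int.gcd (M + r) r = 1 := by simpa using h
  have g2 : Int.gcd (M + r) M = 1 := by rw [Int.gcd_comm] at h; simpa using h
  rw [kD_congr n r _ A hr (inv_dvd inv hinv r M A hr h ⟨-B, by linarith⟩),
    kD_congr n r _ A hr (inv_dvd inv hinv r (M + r) A hr g1 ⟨A - B, by linarith⟩),
    kD_congr n M _ B hM (inv_dvd inv hinv M (M + r) B hM g2 ⟨B - A, by linarith⟩)]
  have hr0 : (0 : ℝ) < r := by exact_mod_cast (by omega : 0 < r)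
  have hM0 : (0 : ℝ) < M := by exact_mod_cast (by omega : 0 < M)
  have hABr : (A : ℝ) * M + B * r = 1 := by exact_mod_cast hAB
  unfold kD
  rw [← kc_neg n ((B : ℝ) / M - _), add_comm,
    ← intervalIntegral.integral_add_adjacent_intervals (kc_int n _ _) (kc_int n _ _)]
  push_cast
  have e1 : (A : ℝ) / r - 1 / (M * r) = -(B / M) := by
    field_simp; linarith
  have e2 : (A : ℝ) / r - 1 / ((M + r) * r) = -(B / M - 1 / ((M + r) * M)) := by
    have : (M + r : ℝ) ≠ 0 := by positivity
    field_simp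
    linear_combination (M + r : ℝ) * hABr
  rw [e1, e2]

/-- summand -/
noncomputable def kg (inv : ℤ → ℤ → ℤ) (n q a : ℤ) : ℝ :=
  if Int.gcd a q = 1 then kD n (inv q a / q) (1 / (a * q)) else 0

lemma kg_mediant (inv : ℤ → ℤ → ℤ)
    (hinv : ∀ q a : ℤ, 1 ≤ q → Int.gcd a q = 1 → (a * inv q a) % q = 1 % q)
    (n r M : ℤ) (hr : 1 ≤ r) (hM : 1 ≤ M) :
    kg inv n r M = kg inv n r (M + r) + kg inv n M (M + r) := by
  unfold kg
  have g1 : Int.gcd (M + r) r = Int.gcd M r := by simp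
  have g2 : Int.gcd (M + r) M = Int.gcd M r := by rw [Int.gcd_comm M r]; simp
  rw [g1, g2]
  split_ifs with h
  · exact kD_mediant inv hinv n r M hr hM h
  · simp

lemma sum_Icc_top (f : ℤ → ℝ) (a b : ℤ) (h : a ≤ b + 1) :
    ∑ x ∈ Finset.Icc a (b + 1), f x = ∑ x ∈ Finset.Icc a b, f x + f (b + 1) := by
  have : Finset.Icc a (b + 1) = insert (b + 1) (Finset.Icc a b) := by
    ext x; simp only [Finset.mem_Icc, Finset.mem_insert]; omega
  rw [this, Finset.sum_insert (by simp), add_comm]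

lemma sum_Icc_bot (f : ℤ → ℝ) (a b : ℤ) (h : a ≤ b) :
    ∑ x ∈ Finset.Icc a b, f x = f a + ∑ x ∈ Finset.Icc (a + 1) b, f x := by
  have : Finset.Icc a b = insert a (Finset.Icc (a + 1) b) := by
    ext x; simp only [Finset.mem_Icc, Finset.mem_insert]; omega
  rw [this, Finset.sum_insert (by simp)]

lemma sum_Icc_shift (f : ℤ → ℝ) (M b : ℤ) :
    ∑ x ∈ Finset.Icc (M + 1) (M + b), f x = ∑ r ∈ Finset.Icc 1 b, f (M + r) := by
  symm
  apply Finset.sum_bij (fun r _ => M + r)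
  · intro r hr; simp only [Finset.mem_Icc] at *; omega
  · intro r _ s _ h; simpa using h
  · intro x hx; simp only [Finset.mem_Icc] at *; exact ⟨x - M, by omega, by omega⟩
  · intros; rfl

lemma base_val (n : ℤ) (k : ℤ) :
    2 * kD n ((k : ℝ) / (1 : ℤ)) (1 / ((2 : ℤ) * (1 : ℤ))) = if n = 0 then 1 else 0 := by
  rw [kD_congr n 1 k 0 le_rfl (one_dvd _)]
  unfold kD
  split_ifs with h
  · subst h; norm_num
  · have hn : (2 * Real.pi * n : ℝ) ≠ 0 := by
      have : (n : ℝ) ≠ 0 := by exact_mod_cast h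
      positivity
    rw [intervalIntegral.integral_comp_mul_left _ hn, integral_cos]
    have : 2 * Real.pi * n * (((0 : ℤ) : ℝ) / (1 : ℤ) - 1 / ((2 : ℤ) * (1 : ℤ)))
        = -(n * Real.pi) := by
      push_cast; ring
    rw [this]
    simp [Real.sin_int_mul_pi]

lemma total (inv : ℤ → ℤ → ℤ)
    (hinv : ∀ q a : ℤ, 1 ≤ q → Int.gcd a q = 1 → (a * inv q a) % q = 1 % q)
    (n N : ℤ) (hN : 1 ≤ N) :
    2 * ∑ q ∈ Finset.Icc 1 N, ∑ a ∈ Finset.Icc (N + 1) (q + N), kg inv n q a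
      = if n = 0 then 1 else 0 := by
  induction N, hN using Int.leInduction with
  | base =>
    have := base_val n (inv 1 2)
    simpa [kg] using this
  | succ N hN ih =>
    rw [← ih]
    congr 1
    rw [sum_Icc_top _ _ _ (by omega)]
    have h1 : ∑ a ∈ Finset.Icc (N + 1 + 1) (N + 1 + (N + 1)), kg inv n (N + 1) a
        = ∑ r ∈ Finset.Icc 1 N, kg inv n (N + 1) (N + 1 + r) := by
      rw [sum_Icc_shift, sum_Icc_top _ _ _ (by omega)]
      have : kg inv n (N + 1) (N + 1 + (N + 1)) = 0 := by
        unfold kg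
        rw [if_neg]
        intro h
        have : Int.gcd (N + 1) (N + 1) = 1 := by simpa using h
        rw [Int.gcd_self] at this
        omega
      rw [this, add_zero]
    rw [h1, ← Finset.sum_add_distrib]
    apply Finset.sum_congr rfl
    intro q hq
    rw [Finset.mem_Icc] at hq
    rw [sum_Icc_bot _ (N + 1) _ (by omega), kg_mediant inv hinv n q (N + 1) hq.1 (by omega),
      ← add_assoc q N 1, sum_Icc_top _ _ _ (by omega)]
    rw [show q + N + 1 = N + 1 + q by ring]
    ring

lemma re_term (n q a A : ℤ) (x : ℝ) :
    ((1 / ((a : ℂ) * (q : ℂ))) *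
      e ((n : ℝ) * (A : ℝ) / (q : ℝ) - (n : ℝ) * x / ((a : ℝ) * (q : ℝ)))).re =
    (1 / ((a : ℝ) * q)) * Real.cos (2 * Real.pi * n * (A / q - 1 / (a * q) * x)) := by
  have h : (1 / ((a : ℂ) * (q : ℂ))) = ((1 / ((a : ℝ) * q) : ℝ) : ℂ) := by push_cast; rfl
  rw [h, Complex.re_ofReal_mul]
  congr 1
  unfold e
  rw [show (2 * Real.pi * Complex.I * (((n : ℝ) * (A : ℝ) / (q : ℝ) - (n : ℝ) * x / ((a : ℝ) * (q : ℝ)) : ℝ) : ℂ)) =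
    ((2 * Real.pi * n * (A / q - 1 / (a * q) * x) : ℝ) : ℂ) * Complex.I by push_cast; ring]
  rw [Complex.exp_ofReal_mul_I_re]

/-- Kloosterman's version of the circle method: for a real `Q ≥ 1` and an integer `n`,
`δ(n=0) = 2 Re ∫_0^1 Σ_{1 ≤ q ≤ Q} Σ_{Q < a ≤ q+Q, (a,q)=1} (1/(aq)) e(n·ā/q − n·x/(aq)) dx`,
where `ā` is any inverse of `a` modulo `q`. -/
theorem stmt1 (Q : ℝ) (hQ : 1 ≤ Q) (n : ℤ) (inv : ℤ → ℤ → ℤ)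
    (hinv : ∀ q a : ℤ, 1 ≤ q → Int.gcd a q = 1 → (a * inv q a) % q = 1 % q) :
    (if n = 0 then (1:ℝ) else 0) =
      2 * (∫ x in (0:ℝ)..1,
        ∑ q ∈ Finset.Icc 1 ⌊Q⌋,
          ∑ a ∈ (Finset.Icc (⌊Q⌋ + 1) (q + ⌊Q⌋)).filter (fun a => Int.gcd a q = 1),
            (1 / ((a : ℂ) * (q : ℂ))) *
              e ((n : ℝ) * (inv q a : ℝ) / (q : ℝ) - (n : ℝ) * x / ((a : ℝ) * (q : ℝ)))).re := by
  have hN : 1 ≤ ⌊Q⌋ := Int.le_floor.mpr (by exact_mod_cast hQ)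
  rw [← total inv hinv n ⌊Q⌋ hN]
  congr 1
  rw [← Complex.reCLM_apply, ← ContinuousLinearMap.intervalIntegral_comp_comm]
  swap
  · apply Continuous.intervalIntegrable
    unfold e
    fun_prop
  simp only [map_sum, Complex.reCLM_apply, re_term]
  rw [intervalIntegral.integral_finsetSum]
  swap
  · intro q _
    apply Continuous.intervalIntegrable
    fun_prop
  apply Finset.sum_congr rfl
  intro q _
  rw [intervalIntegral.integral_finsetSum]
  swap
  · intro q _
    apply Continuous.intervalIntegrable
    fun_prop
  rw [Finset.sum_filter]
  apply Finset.sum_congr rfl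
  intro a _
  unfold kg
  congr 1
  rw [intervalIntegral.integral_const_mul,
    intervalIntegral.mul_integral_comp_sub_mul (f := fun t => Real.cos (2 * Real.pi * n * t))]
  simp [kD]
end

section
/- Let [a,b] ⊂ (0,∞) and let U : ℝ → ℝ be a smooth function supported in [a,b] with |U^{(j)}(x)| ≤ K_j for all j ≥ 0 and all x. Fix σ ∈ ℝ. Then there is a constant C, depending only on a, b, σ and finitely many of the K_j, such that for all real r ≠ 0 and all real β ≠ 0, writing s = σ + iβ and U†(r,s) = ∫_0^∞ U(x) e(−rx) x^{s−1} dx, one has |U†(r,s) − (√(2π) e(1/8)/√(−β)) · (β/(2πer))^{iβ} · U₀(σ, β/(2πr))| ≤ C · min{|β|^{−3/2}, |r|^{−3/2}}, where U₀(σ,x) = x^σ U(x) and √(−β) denotes the principal branch of the complex square root (so √(−β) = i√β when β > 0). -/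
open Complex Real

/-- The Fourier–Mellin transform `U†(r,s) = ∫_0^∞ U(x) e(−rx) x^{s−1} dx`. -/
noncomputable def Udag (U : ℝ → ℝ) (r : ℝ) (s : ℂ) : ℂ :=
  ∫ x in Set.Ioi (0:ℝ), (U x : ℂ) * e (-(r * x)) * (x : ℂ) ^ (s - 1)


open scoped ContDiff FourierTransform SchwartzMap
open Filter Topology MeasureTheory

lemma morse_p : ∃ p : ℝ → ℝ, ContDiff ℝ ∞ p ∧ (∀ t, Real.exp t - 1 - t = t ^ 2 * p t) ∧
    ∀ t, 0 < p t := by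
  set f : ℂ → ℂ := fun z => Complex.exp z - 1 - z with hf
  have df : Differentiable ℂ f := by fun_prop
  have d1 : Differentiable ℂ (dslope f 0) := by
    rw [← differentiableOn_univ] at df ⊢
    exact (Complex.differentiableOn_dslope (by simp)).2 df
  have d2 : Differentiable ℂ (dslope (dslope f 0) 0) := by
    rw [← differentiableOn_univ] at d1 ⊢
    exact (Complex.differentiableOn_dslope (by simp)).2 d1
  set g2 := dslope (dslope f 0) 0 with hg2
  have f0 : f 0 = 0 := by simp [hf]
  have g10 : dslope f 0 0 = 0 := by
    rw [dslope_same]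
    have : HasDerivAt f (Complex.exp 0 - 1) 0 :=
      ((Complex.hasDerivAt_exp 0).sub_const 1).sub (hasDerivAt_id 0)
    rw [this.deriv]; simp
  have key : ∀ z, f z = z ^ 2 * g2 z := by
    intro z
    have h1 := sub_smul_dslope f 0 z
    have h2 := sub_smul_dslope (dslope f 0) 0 z
    rw [g10, ← hg2] at h2
    rw [f0] at h1
    simp only [sub_zero, smul_eq_mul] at h1 h2
    rw [← h1, ← h2]; ring
  have hp : ∀ t : ℝ, Real.exp t - 1 - t = t ^ 2 * (g2 t).re := by
    intro t
    have := congrArg Complex.re (key t)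
    have e1 : f t = ((Real.exp t - 1 - t : ℝ) : ℂ) := by simp [hf]
    have e2 : (t : ℂ) ^ 2 * g2 t = ((t ^ 2 : ℝ) : ℂ) * g2 t := by push_cast; rfl
    rw [e1, e2, Complex.re_ofReal_mul, Complex.ofReal_re] at this
    exact this
  have hc : ContDiff ℝ ∞ (fun t : ℝ => (g2 t).re) := by
    have h1 : ContDiff ℂ ∞ g2 := d2.contDiff
    have h2 : ContDiff ℝ ∞ g2 := h1.restrict_scalars ℝ
    exact Complex.reCLM.contDiff.comp (h2.comp Complex.ofRealCLM.contDiff)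
  refine ⟨fun t => (g2 t).re, hc, hp, ?_⟩
  intro t
  rcases eq_or_ne t 0 with rfl | ht
  · have h1 : Tendsto (fun t : ℝ => (g2 t).re) (𝓝[>] 0) (𝓝 ((g2 ((0:ℝ):ℂ)).re)) :=
      (hc.continuous.tendsto 0).mono_left nhdsWithin_le_nhds
    have h2 : (1/2 : ℝ) ≤ (g2 ((0:ℝ):ℂ)).re := by
      refine ge_of_tendsto h1 ?_
      filter_upwards [self_mem_nhdsWithin] with x hx
      have hx : 0 < x := hx
      have := Real.quadratic_le_exp_of_nonneg hx.le
      have h3 := hp x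
      have h4 : 0 < x ^ 2 := by positivity
      by_contra hcon
      push Not at hcon
      nlinarith
    show (0:ℝ) < (g2 ((0:ℝ):ℂ)).re
    linarith
  · have h1 := Real.add_one_lt_exp ht
    have h2 := hp t
    have h4 : 0 < t ^ 2 := by positivity
    by_contra hcon
    push Not at hcon
    have h5 : (g2 t).re ≤ 0 := hcon
    nlinarith

lemma morse : ∃ T : ℝ → ℝ, ContDiff ℝ ∞ T ∧ StrictMono T ∧ Function.Surjective T ∧ T 0 = 0 ∧
    (∀ u, Real.exp (T u) - 1 - T u = u ^ 2 / 2) ∧ deriv T 0 = 1 ∧ ∀ u, 0 ≤ deriv T u := by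
  obtain ⟨p, pc, hp, ppos⟩ := morse_p
  set s : ℝ → ℝ := fun t => Real.sqrt (2 * p t) with hs
  have spos : ∀ t, 0 < s t := fun t => Real.sqrt_pos.2 (by linarith [ppos t])
  have sc : ContDiff ℝ ∞ s := (contDiff_const.mul pc).sqrt (fun t => by linarith [ppos t])
  set q : ℝ → ℝ := fun t => t * s t with hq
  have qc : ContDiff ℝ ∞ q := contDiff_id.mul sc
  have qd : Differentiable ℝ q := qc.differentiable (by simp)
  have qsq : ∀ t, q t ^ 2 = 2 * (Real.exp t - 1 - t) := by
    intro t
    have : s t ^ 2 = 2 * p t := Real.sq_sqrt (by linarith [ppos t])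
    rw [hp]; simp only [hq]; rw [mul_pow, this]; ring
  have qd' : ∀ t, HasDerivAt q (deriv q t) t := fun t => (qd t).hasDerivAt
  have qrel : ∀ t, q t * deriv q t = Real.exp t - 1 := by
    intro t
    have h1 := (qd' t).pow 2
    have h2 : HasDerivAt (q ^ 2) (2 * (Real.exp t - 1)) t := by
      have : q ^ 2 = fun t => 2 * (Real.exp t - 1 - t) := by ext t; simpa using qsq t
      rw [this]
      exact (((Real.hasDerivAt_exp t).sub_const 1).sub (hasDerivAt_id t)).const_mul 2
    have := h1.unique h2
    simp at this
    linarith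
  have qpos : ∀ t, 0 < deriv q t := by
    intro t
    rcases lt_trichotomy t 0 with ht | rfl | ht
    · have h1 : q t < 0 := mul_neg_of_neg_of_pos ht (spos t)
      have h2 : Real.exp t < 1 := by simpa using Real.exp_lt_exp.2 ht
      have := qrel t
      by_contra hcon
      push Not at hcon
      nlinarith
    · have h1 : HasDerivAt q (1 * s 0 + 0 * deriv s 0) 0 :=
        (hasDerivAt_id (0:ℝ)).mul ((sc.differentiable (by simp) 0).hasDerivAt)
      rw [h1.deriv]; simpa using spos 0
    · have h1 : 0 < q t := mul_pos ht (spos t)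
      have h2 : 1 < Real.exp t := Real.one_lt_exp_iff.2 ht
      have := qrel t
      by_contra hcon
      push Not at hcon
      nlinarith
  have qmono : StrictMono q := strictMono_of_deriv_pos qpos
  have qtop : Tendsto q atTop atTop := by
    refine tendsto_atTop_mono' _ ?_ tendsto_id
    filter_upwards [eventually_gt_atTop 0] with t ht
    have h1 : 0 < q t := mul_pos ht (spos t)
    have := Real.quadratic_le_exp_of_nonneg ht.le
    have h2 := qsq t
    simp only [id]
    nlinarith
  have qbot : Tendsto q atBot atBot := by
    have h0 : Tendsto (fun t : ℝ => - Real.sqrt (2 * (-1 - t))) atBot atBot := by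
      refine tendsto_neg_atTop_atBot.comp ?_
      refine Real.tendsto_sqrt_atTop.comp ?_
      refine Tendsto.const_mul_atTop (by norm_num) ?_
      have := tendsto_neg_atBot_atTop (G := ℝ)
      exact (tendsto_atTop_add_const_left atBot (-1) this).congr (fun t => by simp [sub_eq_add_neg])
    refine tendsto_atBot_mono' _ ?_ h0
    filter_upwards [eventually_lt_atBot 0] with t ht
    have h1 : q t < 0 := mul_neg_of_neg_of_pos ht (spos t)
    rw [le_neg]
    apply Real.sqrt_le_iff.2 ⟨by linarith, ?_⟩
    have h2 := qsq t
    have := Real.exp_pos t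
    nlinarith
  have qsurj : Function.Surjective q := qc.continuous.surjective qtop qbot
  set o := (qmono.orderIsoOfSurjective q qsurj) with ho
  set Q := o.toHomeomorph with hQ
  have Qq : ∀ t, Q t = q t := fun t => rfl
  have Qs : ∀ u, q (Q.symm u) = u := fun u => by rw [← Qq]; simp
  have Tc : ContDiff ℝ ∞ (Q.symm : ℝ → ℝ) :=
    Q.contDiff_symm_deriv (fun t => (qpos t).ne') qd' qc
  have q0 : q 0 = 0 := by simp [hq]
  have T0 : Q.symm 0 = 0 := qmono.injective (by rw [Qs, q0])
  have Tm : StrictMono (Q.symm : ℝ → ℝ) := o.symm.strictMono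
  have Trel : ∀ u, Real.exp (Q.symm u) - 1 - Q.symm u = u ^ 2 / 2 := by
    intro u
    have := qsq (Q.symm u)
    rw [Qs] at this; linarith
  have Tnn : ∀ u, 0 ≤ deriv (Q.symm : ℝ → ℝ) u := fun u => Tm.monotone.deriv_nonneg
  have Ts : Function.Surjective (fun u => Q.symm u) := Q.symm.surjective
  obtain ⟨T, hT⟩ : ∃ T : ℝ → ℝ, T = (fun u => Q.symm u) := ⟨_, rfl⟩
  replace Tc : ContDiff ℝ ∞ T := hT ▸ Tc
  replace Tm : StrictMono T := hT ▸ Tm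
  replace Ts : Function.Surjective T := hT ▸ Ts
  replace T0 : T 0 = 0 := hT ▸ T0
  replace Trel : ∀ u, Real.exp (T u) - 1 - T u = u ^ 2 / 2 := hT ▸ Trel
  replace Tnn : ∀ u, 0 ≤ deriv T u := hT ▸ Tnn
  refine ⟨T, Tc, Tm, Ts, T0, Trel, ?_, Tnn⟩
  have Td : ∀ u, HasDerivAt T (deriv T u) u := fun u => (Tc.differentiable (by simp) u).hasDerivAt
  have r1 : ∀ u, (Real.exp (T u) - 1) * deriv T u = u := by
    intro u
    have h1 : HasDerivAt (fun u => Real.exp (T u) - 1 - T u)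
      (Real.exp (T u) * deriv T u - deriv T u) u := ((Td u).exp.sub_const 1).sub (Td u)
    have h2 : HasDerivAt (fun u => Real.exp (T u) - 1 - T u) u u := by
      have : (fun u => Real.exp (T u) - 1 - T u) = fun u => u ^ 2 / 2 := funext Trel
      rw [this]
      simpa using (hasDerivAt_pow 2 u).div_const 2
    have := h1.unique h2
    linarith
  have hdd : HasDerivAt (deriv T) (deriv (deriv T) 0) 0 :=
    ((contDiff_infty_iff_deriv.1 Tc).2.differentiable (by simp) 0).hasDerivAt
  have h1 := ((Td 0).exp.sub_const 1).mul hdd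
  have h2 : HasDerivAt (fun u => (Real.exp (T u) - 1) * deriv T u) 1 0 := by
    rw [funext r1]; exact hasDerivAt_id 0
  have h3 := h1.unique h2
  rw [T0] at h3
  simp at h3
  have := Tnn 0
  nlinarith

lemma norm_cexp_sub_one_le {z : ℂ} (hz : z.re ≤ 0) : ‖cexp z - 1‖ ≤ ‖z‖ := by
  have := (convex_halfSpace_re_le (0:ℝ)).norm_image_sub_le_of_norm_deriv_le (𝕜 := ℂ)
    (f := cexp) (C := 1) (x := 0) (y := z)
    (fun x _ => Complex.differentiableAt_exp) (fun x hx => by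
      rw [Complex.deriv_exp, Complex.norm_exp]
      exact Real.exp_le_one_iff.2 hx) (by simp) hz
  simpa using this

lemma gauss_re (H : 𝓢(ℝ, ℂ)) (B : ℝ) (hB : ∀ ξ : ℝ, ξ ^ 2 * (1 + ξ ^ 2) * ‖𝓕 (H : ℝ → ℂ) ξ‖ ≤ B)
    (b : ℂ) (hb : 0 < b.re) :
    ‖(∫ u : ℝ, cexp (-π * b * u ^ 2) * H u) - 1 / b ^ (1 / 2 : ℂ) * H 0‖ ≤
      ‖1 / b ^ (1 / 2 : ℂ)‖ * (π / ‖b‖ * (B * π)) := by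
  have hb0 : b ≠ 0 := by rintro rfl; simp at hb
  set F : 𝓢(ℝ, ℂ) := 𝓕⁻ H with hF
  have hFH : ∀ x, 𝓕 (F : ℝ → ℂ) x = H x := by
    intro x
    have h1 : 𝓕 F = H := by rw [hF]; exact FourierTransform.fourier_fourierInv_eq H
    rw [← SchwartzMap.fourier_coe, h1]
  have hFn : ∀ ξ, F ξ = 𝓕 (H : ℝ → ℂ) (-ξ) := by
    intro ξ
    rw [hF, SchwartzMap.fourierInv_coe, Real.fourierInv_eq_fourier_neg]
  have hGi : Integrable (fun x : ℝ => cexp (-π * b * x ^ 2)) := by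
    have := integrable_cexp_neg_mul_sq (b := π * b) (by
      rw [Complex.re_ofReal_mul]; exact mul_pos Real.pi_pos hb)
    simpa [neg_mul] using this
  have h1 : ∫ ξ : ℝ, (𝓕 (fun x : ℝ => cexp (-π * b * x ^ 2)) ξ) • F ξ =
      ∫ x : ℝ, cexp (-π * b * x ^ 2) • 𝓕 (F : ℝ → ℂ) x := by
    simpa using! VectorFourier.integral_fourierIntegral_smul_eq_flip (L := innerₗ ℝ)
      Real.continuous_fourierChar continuous_inner hGi F.integrable
  rw [fourier_gaussian_pi hb] at h1
  simp only [hFH, smul_eq_mul] at h1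
  have h2 : ∫ ξ : ℝ, F ξ = H 0 := by
    rw [← hFH 0, Real.fourier_real_eq_integral_exp_smul]
    simp
  have hgb : ∀ ξ : ℝ, (-π / b * ξ ^ 2 : ℂ).re ≤ 0 := by
    intro ξ
    have : (-π / b * ξ ^ 2 : ℂ) = ((-(π * ξ ^ 2) : ℝ) : ℂ) * b⁻¹ := by
      push_cast; field_simp
    rw [this, Complex.re_ofReal_mul, Complex.inv_re]
    have : 0 ≤ b.re / normSq b := div_nonneg hb.le (normSq_nonneg _)
    have h3 : 0 ≤ π * ξ ^ 2 := by positivity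
    nlinarith
  have hi : Integrable (fun ξ : ℝ => 1 / b ^ (1 / 2 : ℂ) * cexp (-π / b * ξ ^ 2) * F ξ) := by
    refine Integrable.bdd_mul (c := ‖1 / b ^ (1 / 2 : ℂ)‖) F.integrable ?_ ?_
    · apply Continuous.aestronglyMeasurable; fun_prop
    · refine ae_of_all _ fun ξ => ?_
      rw [norm_mul, Complex.norm_exp]
      exact mul_le_of_le_one_right (norm_nonneg _) (Real.exp_le_one_iff.2 (hgb ξ))
  rw [← h1, ← h2, ← integral_const_mul, ← integral_sub hi (F.integrable.const_mul _)]
  have hbi : Integrable (fun ξ : ℝ => ‖1 / b ^ (1 / 2 : ℂ)‖ * (π / ‖b‖ * (B * (1 + ξ ^ 2)⁻¹))) :=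
    ((integrable_inv_one_add_sq.const_mul _).const_mul _).const_mul _
  refine (norm_integral_le_of_norm_le hbi (ae_of_all _ fun ξ => ?_)).trans ?_
  · have : 1 / b ^ (1 / 2 : ℂ) * cexp (-π / b * ξ ^ 2) * F ξ - 1 / b ^ (1 / 2 : ℂ) * F ξ
      = 1 / b ^ (1 / 2 : ℂ) * ((cexp (-π / b * ξ ^ 2) - 1) * F ξ) := by ring
    rw [this, norm_mul]
    refine mul_le_mul_of_nonneg_left ?_ (norm_nonneg _)
    rw [norm_mul]
    have h4 : ‖cexp (-π / b * ξ ^ 2) - 1‖ ≤ ‖(-π / b * ξ ^ 2 : ℂ)‖ := by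
      exact norm_cexp_sub_one_le (hgb ξ)
    have h5 : ‖(-π / b * ξ ^ 2 : ℂ)‖ = π / ‖b‖ * ξ ^ 2 := by
      rw [norm_mul, norm_div, norm_neg, norm_pow, Complex.norm_real, Complex.norm_real]
      simp [abs_of_pos Real.pi_pos]
    rw [h5] at h4
    have h6 : ξ ^ 2 * ‖F ξ‖ ≤ B * (1 + ξ ^ 2)⁻¹ := by
      have := hB (-ξ)
      rw [← hFn] at this
      rw [← div_eq_mul_inv, le_div_iff₀ (by positivity)]
      nlinarith
    calc _ ≤ π / ‖b‖ * ξ ^ 2 * ‖F ξ‖ := by gcongr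
      _ = π / ‖b‖ * (ξ ^ 2 * ‖F ξ‖) := by ring
      _ ≤ _ := by gcongr
  · rw [integral_const_mul, integral_const_mul, integral_const_mul, integral_univ_inv_one_add_sq]

lemma gauss_im (H : 𝓢(ℝ, ℂ)) (B : ℝ) (hB : ∀ ξ : ℝ, ξ ^ 2 * (1 + ξ ^ 2) * ‖𝓕 (H : ℝ → ℂ) ξ‖ ≤ B)
    (y : ℝ) (hy : y ≠ 0) :
    ‖(∫ u : ℝ, cexp (-π * (I * y) * u ^ 2) * H u) - 1 / (I * y) ^ (1 / 2 : ℂ) * H 0‖ ≤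
      π * (B * π) * |y| ^ (-(3:ℝ)/2) := by
  have hsl : I * (y:ℂ) ∈ slitPlane := by
    rw [Complex.mem_slitPlane_iff]; right; simpa using hy
  have hne : I * (y:ℂ) ≠ 0 := by simpa using hy
  have hRHS : ‖1 / (I * (y:ℂ)) ^ (1 / 2 : ℂ)‖ * (π / ‖I * (y:ℂ)‖ * (B * π))
      = π * (B * π) * |y| ^ (-(3:ℝ)/2) := by
    have h1 : ‖(I * (y:ℂ)) ^ (1 / 2 : ℂ)‖ = |y| ^ (1/2 : ℝ) := by
      have : (1 / 2 : ℂ) = ((1/2 : ℝ) : ℂ) := by push_cast; rfl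
      rw [this, Complex.norm_cpow_real]; simp
    have h2 : 0 < |y| := abs_pos.2 hy
    rw [norm_div, h1, norm_mul]
    have h3 : |y| ^ (-(3:ℝ)/2) = (|y| ^ (1/2 : ℝ))⁻¹ * |y|⁻¹ := by
      rw [← Real.rpow_neg_one |y|, ← Real.rpow_neg h2.le, ← Real.rpow_add h2]; norm_num
    rw [h3]; simp; field_simp
  have hc : Tendsto (fun ε : ℝ => (ε : ℂ) + I * y) (𝓝[>] 0) (𝓝 (I * y)) := by
    have : Continuous (fun ε : ℝ => (ε : ℂ) + I * y) := by fun_prop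
    have := this.tendsto 0
    simp only [Complex.ofReal_zero, zero_add] at this
    exact this.mono_left nhdsWithin_le_nhds
  have hcp : Tendsto (fun ε : ℝ => ((ε : ℂ) + I * y) ^ (1 / 2 : ℂ)) (𝓝[>] 0)
      (𝓝 ((I * y) ^ (1 / 2 : ℂ))) :=
    ((continuousAt_cpow_const hsl).tendsto.comp hc)
  have hcp1 : Tendsto (fun ε : ℝ => 1 / ((ε : ℂ) + I * y) ^ (1 / 2 : ℂ)) (𝓝[>] 0)
      (𝓝 (1 / (I * y) ^ (1 / 2 : ℂ))) :=
    tendsto_const_nhds.div hcp (by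
      rw [Ne, Complex.cpow_eq_zero_iff]; tauto)
  have hint : Tendsto (fun ε : ℝ => ∫ u : ℝ, cexp (-π * ((ε : ℂ) + I * y) * u ^ 2) * H u) (𝓝[>] 0)
      (𝓝 (∫ u : ℝ, cexp (-π * (I * y) * u ^ 2) * H u)) := by
    refine tendsto_integral_filter_of_dominated_convergence (fun u => ‖H u‖) ?_ ?_ ?_ ?_
    · refine Eventually.of_forall fun ε => ?_
      have := H.continuous
      apply Continuous.aestronglyMeasurable
      fun_prop
    · filter_upwards [self_mem_nhdsWithin] with ε hε
      have hε : 0 < ε := hε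
      refine ae_of_all _ fun u => ?_
      rw [norm_mul, Complex.norm_exp]
      refine mul_le_of_le_one_left (norm_nonneg _) (Real.exp_le_one_iff.2 ?_)
      have : (-π * ((ε : ℂ) + I * y) * u ^ 2 : ℂ) =
          ((-(π * ε * u ^ 2) : ℝ) : ℂ) + ((-(π * y * u ^ 2) : ℝ) : ℂ) * I := by
        push_cast; ring
      rw [this]
      have : 0 ≤ π * ε * u ^ 2 := by positivity
      simp only [Complex.add_re, Complex.ofReal_re, Complex.re_ofReal_mul, Complex.I_re]
      linarith
    · exact H.integrable.norm
    · refine ae_of_all _ fun u => ?_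
      have : Continuous (fun z : ℂ => cexp (-π * z * u ^ 2) * H u) := by fun_prop
      exact (this.tendsto _).comp hc
  rw [← hRHS]
  refine le_of_tendsto_of_tendsto (hint.sub (hcp1.mul_const (H 0))).norm
    (hcp1.norm.mul ((tendsto_const_nhds.div hc.norm (by simpa using hy)).mul_const (B * π))) ?_
  filter_upwards [self_mem_nhdsWithin] with ε hε
  have hε : 0 < ε := hε
  exact gauss_re H B hB _ (by simpa using hε)

lemma fourier_bound (f : ℝ → ℂ) (hf : ContDiff ℝ ∞ f) (R M : ℝ) (hR : 0 ≤ R)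
    (hs : tsupport f ⊆ Set.Icc (-R) R)
    (hM : ∀ n ≤ 4, ∀ x ∈ Set.Icc (-R) R, ‖iteratedDeriv n f x‖ ≤ M) (ξ : ℝ) :
    ξ ^ 2 * (1 + ξ ^ 2) * ‖𝓕 f ξ‖ ≤ 4 * R * M := by
  have hcs : HasCompactSupport f := isCompact_Icc.of_isClosed_subset (isClosed_tsupport f) hs
  have hcont : ∀ n : ℕ, Continuous (iteratedDeriv n f) := fun n =>
    hf.continuous_iteratedDeriv n (by exact_mod_cast le_top)
  have hsup : ∀ n : ℕ, ∀ x, x ∉ Set.Icc (-R) R → iteratedDeriv n f x = 0 := by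
    intro n x hx
    by_contra hne
    have h1 : iteratedFDeriv ℝ n f x ≠ 0 := by
      intro h; apply hne; rw [iteratedDeriv, h]; rfl
    exact hx (hs (support_iteratedFDeriv_subset n h1))
  have hint : ∀ n : ℕ, Integrable (iteratedDeriv n f) := by
    intro n
    refine (hcont n).integrable_of_hasCompactSupport ?_
    exact HasCompactSupport.intro isCompact_Icc (hsup n)
  have key : ∀ n ≤ 4, (2 * π * |ξ|) ^ n * ‖𝓕 f ξ‖ ≤ 2 * R * M := by
    intro n hn
    have h1 := congrFun (Real.fourier_iteratedDeriv (N := ⊤) (n := n) hf (fun n _ => hint n) le_top) ξ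
    have h2 : ‖𝓕 (iteratedDeriv n f) ξ‖ ≤ 2 * R * M := by
      rw [Real.fourier_real_eq_integral_exp_smul]
      have h3 : ∫ v : ℝ, cexp (((-2 * π * v * ξ : ℝ) : ℂ) * I) • iteratedDeriv n f v
        = ∫ v in Set.Icc (-R) R, cexp (((-2 * π * v * ξ : ℝ) : ℂ) * I) • iteratedDeriv n f v := by
        symm
        apply setIntegral_eq_integral_of_forall_compl_eq_zero
        intro x hx
        rw [hsup n x hx, smul_zero]
      rw [h3]
      have := norm_setIntegral_le_of_norm_le_const (μ := volume) (s := Set.Icc (-R) R) (C := M)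
        (f := fun v => cexp (((-2 * π * v * ξ : ℝ) : ℂ) * I) • iteratedDeriv n f v)
        (by simp) (fun x hx => by
          rw [norm_smul, Complex.norm_exp_ofReal_mul_I, one_mul]; exact hM n hn x hx)
      refine this.trans (le_of_eq ?_)
      rw [measureReal_def, Real.volume_Icc, ENNReal.toReal_ofReal (by linarith)]; ring
    rw [h1, norm_smul, norm_pow] at h2
    have h4 : ‖(2 * π * I * ξ : ℂ)‖ = 2 * π * |ξ| := by
      simp [abs_of_pos Real.pi_pos]
    rwa [h4] at h2
  have k2 := key 2 (by norm_num)
  have k4 := key 4 (by norm_num)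
  have hpi : 1 ≤ 2 * π := by linarith [Real.pi_gt_three]
  have e2 : ξ ^ 2 ≤ (2 * π * |ξ|) ^ 2 := by
    rw [mul_pow, sq_abs]; exact le_mul_of_one_le_left (sq_nonneg _) (one_le_pow₀ hpi)
  have e4 : ξ ^ 4 ≤ (2 * π * |ξ|) ^ 4 := by
    have : |ξ| ^ 4 = ξ ^ 4 := by rw [show (4:ℕ) = 2 * 2 from rfl, pow_mul, sq_abs, pow_mul]
    rw [mul_pow, this]; exact le_mul_of_one_le_left (by positivity) (one_le_pow₀ hpi)
  have n0 := norm_nonneg (𝓕 f ξ)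
  have m2 := mul_le_mul_of_nonneg_right e2 n0
  have m4 := mul_le_mul_of_nonneg_right e4 n0
  nlinarith

lemma bdd_derivs (E : ℝ → ℝ) (hE : ContDiff ℝ ∞ E) (R : ℝ) :
    ∃ S, 0 ≤ S ∧ ∀ n ≤ 4, ∀ u ∈ Set.Icc (-R) R, ‖iteratedFDeriv ℝ n E u‖ ≤ S := by
  have h : ∀ n : ℕ, ∃ S, ∀ u ∈ Set.Icc (-R) R, ‖iteratedFDeriv ℝ n E u‖ ≤ S := fun n =>
    isCompact_Icc.exists_bound_of_continuousOn
      (hE.continuous_iteratedFDeriv (by exact_mod_cast le_top)).continuousOn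
  choose S hS using h
  refine ⟨∑ n ∈ Finset.range 5, |S n|, Finset.sum_nonneg fun _ _ => abs_nonneg _, ?_⟩
  intro n hn u hu
  calc _ ≤ S n := hS n u hu
    _ ≤ |S n| := le_abs_self _
    _ ≤ _ := Finset.single_le_sum (f := fun n => |S n|) (fun _ _ => abs_nonneg _)
      (Finset.mem_range.2 (by omega))

lemma comp_bound (E W : ℝ → ℝ) (hE : ContDiff ℝ ∞ E) (hW : ContDiff ℝ ∞ W) (R X : ℝ) (hX : 0 ≤ X)
    (K : ℕ → ℝ) :
    ∃ M, 0 ≤ M ∧ ∀ U : ℝ → ℝ, ContDiff ℝ ∞ U → (∀ j : ℕ, ∀ x : ℝ, |iteratedDeriv j U x| ≤ K j) →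
      ∀ x0 : ℝ, |x0| ≤ X → ∀ n ≤ 4, ∀ u ∈ Set.Icc (-R) R,
        ‖iteratedFDeriv ℝ n (fun u => U (x0 * E u) * W u) u‖ ≤ M := by
  obtain ⟨S, hS0, hS⟩ := bdd_derivs E hE R
  obtain ⟨V, hV0, hV⟩ := bdd_derivs W hW R
  set C := ∑ n ∈ Finset.range 5, |K n| with hC
  have hC0 : 0 ≤ C := Finset.sum_nonneg fun _ _ => abs_nonneg _
  set D := 1 + X * S with hD
  have hD1 : 1 ≤ D := by have := mul_nonneg hX hS0; linarith
  refine ⟨2 ^ 4 * (24 * C * D ^ 4 * V), by positivity, ?_⟩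
  intro U hU hK x0 hx0 n hn u hu
  have hxE : ContDiff ℝ ∞ (fun u => x0 * E u) := contDiff_const.mul hE
  have h1 : ∀ i ≤ 4, ‖iteratedFDeriv ℝ i (U ∘ fun u => x0 * E u) u‖ ≤ 24 * C * D ^ 4 := by
    intro i hi
    have := norm_iteratedFDeriv_comp_le (n := i) (N := ∞) hU hxE (by exact_mod_cast le_top) u (C := C) (D := D)
      (fun j hj => by
        rw [norm_iteratedFDeriv_eq_norm_iteratedDeriv, Real.norm_eq_abs]
        calc _ ≤ K j := hK j _
          _ ≤ |K j| := le_abs_self _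
          _ ≤ _ := Finset.single_le_sum (f := fun n => |K n|) (fun _ _ => abs_nonneg _)
            (Finset.mem_range.2 (by omega)))
      (fun j hj1 hj => by
        have h3 : (fun u => x0 * E u) = x0 • E := by ext; simp
        rw [h3, iteratedFDeriv_const_smul_apply (hE.contDiffAt.of_le (by exact_mod_cast le_top)),
          norm_smul, Real.norm_eq_abs]
        calc |x0| * ‖iteratedFDeriv ℝ j E u‖ ≤ X * S := by
              gcongr; exact hS j (by omega) u hu
          _ ≤ D := by linarith
          _ ≤ D ^ j := le_self_pow₀ hD1 (by omega))
    refine this.trans ?_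
    have f1 : (i.factorial : ℝ) ≤ 24 := by
      have := Nat.factorial_le hi
      exact_mod_cast this
    have f2 : D ^ i ≤ D ^ 4 := pow_le_pow_right₀ hD1 hi
    gcongr
  have h2 := norm_iteratedFDeriv_mul_le (N := ∞) (hU.comp hxE) hW u (n := n) (by exact_mod_cast le_top)
  refine h2.trans ?_
  calc _ ≤ ∑ i ∈ Finset.range (n + 1), (n.choose i : ℝ) * (24 * C * D ^ 4 * V) := by
        refine Finset.sum_le_sum fun i hi => ?_
        have hi' : i ≤ n := by simpa [Nat.lt_succ_iff] using hi
        rw [mul_assoc]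
        gcongr
        · exact h1 i (by omega)
        · exact hV _ (by omega) u hu
    _ = 2 ^ n * (24 * C * D ^ 4 * V) := by
        rw [← Finset.sum_mul]; congr 1
        exact_mod_cast Nat.sum_range_choose n
    _ ≤ _ := by gcongr; norm_num

lemma Udag_exp (U : ℝ → ℝ) (r σ β : ℝ) :
    Udag U r (σ + I * β) = ∫ t : ℝ, ((Real.exp (σ * t) * U (Real.exp t) : ℝ) : ℂ) *
      cexp (I * ((β * t - 2 * π * r * Real.exp t : ℝ) : ℂ)) := by
  have h := integral_image_eq_integral_abs_deriv_smul (s := Set.univ) (f := Real.exp)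
    (f' := Real.exp) MeasurableSet.univ (fun x _ => (Real.hasDerivAt_exp x).hasDerivWithinAt)
    Real.exp_injective.injOn
    (fun x : ℝ => (U x : ℂ) * e (-(r * x)) * (x : ℂ) ^ ((σ + I * β : ℂ) - 1))
  rw [Set.image_univ, Real.range_exp] at h
  rw [Udag, h, setIntegral_univ]
  congr 1
  ext t
  have h1 : (Real.exp t : ℂ) ≠ 0 := by exact_mod_cast (Real.exp_pos t).ne'
  rw [Complex.cpow_def_of_ne_zero h1, ← Complex.ofReal_log (Real.exp_pos t).le, Real.log_exp, e,
    abs_of_pos (Real.exp_pos t), Complex.real_smul]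
  have h2 : ∀ A B C D E : ℂ, cexp A * (B * cexp C * cexp D) = B * cexp (A + C + D) := by
    intros; rw [Complex.exp_add, Complex.exp_add]; ring
  rw [Complex.ofReal_mul, Complex.ofReal_exp, Complex.ofReal_exp, h2 _ _ _ _ 0,
    mul_right_comm (cexp _), ← Complex.exp_add, mul_comm (U (Real.exp t) : ℂ)]
  congr 2
  push_cast
  ring

lemma const_eq (β : ℝ) (hβ : β ≠ 0) :
    ((Real.sqrt (2 * Real.pi) : ℝ) : ℂ) * e (1/8) / (((-β : ℝ) : ℂ) ^ ((1:ℂ)/2)) =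
      1 / (I * ((β / (2 * π) : ℝ) : ℂ)) ^ (1 / 2 : ℂ) := by
  have hp : 0 < 2 * π := by positivity
  have hs : ((Real.sqrt (2 * Real.pi) : ℝ) : ℂ) = cexp ((Real.log (2 * π) / 2 : ℝ) : ℂ) := by
    rw [← Complex.ofReal_exp, Real.sqrt_eq_rpow, Real.rpow_def_of_pos hp]
    congr 2; ring
  have hne : (I * ((β / (2 * π) : ℝ) : ℂ)) ≠ 0 :=
    mul_ne_zero I_ne_zero (by exact_mod_cast div_ne_zero hβ hp.ne')
  have hne2 : ((-β : ℝ) : ℂ) ≠ 0 := by exact_mod_cast neg_ne_zero.2 hβ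
  rw [hs, e, Complex.cpow_def_of_ne_zero hne, Complex.cpow_def_of_ne_zero hne2, ← Complex.exp_add,
    ← Complex.exp_sub, one_div (cexp _), ← Complex.exp_neg]
  congr 1
  rcases lt_or_gt_of_ne hβ with h | h
  · have h1 : 0 < -β / (2 * π) := div_pos (by linarith) hp
    have e1 : I * ((β / (2 * π) : ℝ) : ℂ) = ((-β / (2 * π) : ℝ) : ℂ) * (-I) := by push_cast; ring
    rw [e1, Complex.log_ofReal_mul h1 (by simp), Complex.log_neg_I, ← Complex.ofReal_log (by linarith),
      Real.log_div (by linarith) hp.ne']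
    push_cast; ring
  · have h1 : 0 < β / (2 * π) := div_pos (by linarith) hp
    have e2 : ((-β : ℝ) : ℂ) = (β : ℂ) * (-1) := by push_cast; ring
    rw [mul_comm I, Complex.log_ofReal_mul h1 (by simp), Complex.log_I, e2,
      Complex.log_ofReal_mul h (by simp), Complex.log_neg_one,
      Real.log_div (by linarith) hp.ne']
    push_cast; ring

lemma caseB (a b σ : ℝ) (ha : 0 < a) (hab : a ≤ b) (K : ℕ → ℝ) :
    ∃ C, 0 ≤ C ∧ ∀ U : ℝ → ℝ, ContDiff ℝ ∞ U → tsupport U ⊆ Set.Icc a b →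
      (∀ j : ℕ, ∀ x : ℝ, |iteratedDeriv j U x| ≤ K j) →
      ∀ r β : ℝ, r ≠ 0 → β ≠ 0 → β / (2 * π * r) ∈ Set.Icc (a / 2) (2 * b) →
        ‖Udag U r (σ + Complex.I * β)
            - ((Real.sqrt (2 * Real.pi) : ℝ) : ℂ) * e (1/8) / (((-β : ℝ) : ℂ) ^ ((1:ℂ)/2))
              * (((β / (2 * Real.pi * Real.exp 1 * r) : ℝ) : ℂ)) ^ (Complex.I * (β : ℂ))
              * ((((β / (2 * Real.pi * r)) ^ σ * U (β / (2 * Real.pi * r)) : ℝ)) : ℂ)‖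
          ≤ C * |β| ^ (-(3:ℝ)/2) := by
  obtain ⟨T, Tc, Tm, Ts, T0, Trel, Td0, Tnn⟩ := morse
  have hb : 0 < b := ha.trans_le hab
  set L := Real.log (2 * b / a) with hL
  obtain ⟨u1, hu1⟩ := Ts L
  obtain ⟨u2, hu2⟩ := Ts (-L)
  set R := max |u1| |u2| with hR
  have hR0 : 0 ≤ R := le_max_of_le_left (abs_nonneg _)
  set E : ℝ → ℝ := fun u => Real.exp (T u) with hE
  have dTc : ContDiff ℝ ∞ (deriv T) := (contDiff_infty_iff_deriv.1 Tc).2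
  set W : ℝ → ℝ := fun u => Real.exp (σ * T u) * deriv T u with hW
  have Ec : ContDiff ℝ ∞ E := Real.contDiff_exp.comp Tc
  have Wc : ContDiff ℝ ∞ W := (Real.contDiff_exp.comp (contDiff_const.mul Tc)).mul dTc
  obtain ⟨M, hM0, hM⟩ := comp_bound E W Ec Wc R (2 * b) (by linarith) K
  obtain ⟨P, hP⟩ := (isCompact_Icc (a := a / 2) (b := 2 * b)).exists_bound_of_continuousOn
    (f := fun x : ℝ => x ^ σ) (by
      intro x hx
      have : 0 < x := lt_of_lt_of_le (by linarith) hx.1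
      exact (Real.continuousAt_rpow_const _ _ (Or.inl this.ne')).continuousWithinAt)
  refine ⟨|P| * (π * ((4 * R * M) * π) * (2 * π) ^ ((3:ℝ)/2)), by positivity, ?_⟩
  intro U hU hUs hK r β hr hβ hx
  set x0 := β / (2 * π * r) with hx0
  have hx0p : 0 < x0 := lt_of_lt_of_le (by linarith) hx.1
  have hrx : 2 * π * r * x0 = β := by
    rw [hx0]; field_simp
  set H : ℝ → ℂ := fun u => ((U (x0 * E u) * W u : ℝ) : ℂ) with hH
  have Hrc : ContDiff ℝ ∞ (fun u => U (x0 * E u) * W u) :=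
    (hU.comp (contDiff_const.mul Ec)).mul Wc
  have Hc : ContDiff ℝ ∞ H := Complex.ofRealCLM.contDiff.comp Hrc
  have hHs : tsupport H ⊆ Set.Icc (-R) R := by
    refine closure_minimal ?_ isClosed_Icc
    intro u hu
    have h1 : U (x0 * E u) ≠ 0 := by
      intro h0; apply hu; simp [hH, h0]
    have h2 : x0 * E u ∈ Set.Icc a b := hUs (subset_tsupport _ h1)
    have h3 : T u ≤ L := by
      rw [hL, Real.le_log_iff_exp_le (by positivity), le_div_iff₀ ha]
      have : a / 2 * E u ≤ b := le_trans (mul_le_mul_of_nonneg_right hx.1 (Real.exp_pos _).le) h2.2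
      change E u * a ≤ 2 * b
      linarith
    have h4 : -L ≤ T u := by
      rw [hL, ← Real.log_inv, Real.log_le_iff_le_exp (by positivity), inv_div, div_le_iff₀ (by positivity)]
      have : a ≤ 2 * b * E u := le_trans h2.1 (mul_le_mul_of_nonneg_right hx.2 (Real.exp_pos _).le)
      change a ≤ E u * (2 * b)
      linarith
    rw [← hu1] at h3
    rw [← hu2] at h4
    have h5 := Tm.le_iff_le.1 h3
    have h6 := Tm.le_iff_le.1 h4
    constructor
    · have := neg_abs_le u2
      have := le_max_right |u1| |u2|
      linarith
    · have := le_abs_self u1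
      have := le_max_left |u1| |u2|
      linarith
  have hcs : HasCompactSupport H := isCompact_Icc.of_isClosed_subset (isClosed_tsupport H) hHs
  have hMH : ∀ n ≤ 4, ∀ u ∈ Set.Icc (-R) R, ‖iteratedDeriv n H u‖ ≤ M := by
    intro n hn u hu
    rw [← norm_iteratedFDeriv_eq_norm_iteratedDeriv]
    have : ‖iteratedFDeriv ℝ n H u‖ = ‖iteratedFDeriv ℝ n (fun u => U (x0 * E u) * W u) u‖ :=
      Complex.ofRealLI.norm_iteratedFDeriv_comp_left (n := ∞) (Hrc.contDiffAt) (by exact_mod_cast le_top)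
    rw [this]
    exact hM U hU hK x0 (by rw [abs_of_pos hx0p]; exact hx.2) n hn u hu
  have hFB := fourier_bound H Hc R M hR0 hHs hMH
  have hy : β / (2 * π) ≠ 0 := div_ne_zero hβ (by positivity)
  have hG := gauss_im (hcs.toSchwartzMap Hc) (4 * R * M) hFB (β / (2 * π)) hy
  simp only [HasCompactSupport.toSchwartzMap_toFun] at hG
  have hH0 : H 0 = (U x0 : ℂ) := by simp [hH, hE, hW, T0, Td0]
  rw [hH0] at hG
  set Z : ℂ := cexp (I * ((β * Real.log x0 - β : ℝ) : ℂ)) with hZ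
  have hZn : ‖Z‖ = 1 := by rw [hZ, mul_comm, Complex.norm_exp_ofReal_mul_I]
  have hpow : (((β / (2 * Real.pi * Real.exp 1 * r) : ℝ) : ℂ)) ^ (Complex.I * (β : ℂ)) = Z := by
    have h1 : β / (2 * Real.pi * Real.exp 1 * r) = x0 / Real.exp 1 := by
      rw [hx0]; field_simp
    have h2 : 0 < x0 / Real.exp 1 := div_pos hx0p (Real.exp_pos _)
    rw [h1, Complex.cpow_def_of_ne_zero (by exact_mod_cast h2.ne'), ← Complex.ofReal_log h2.le,
      Real.log_div hx0p.ne' (Real.exp_pos _).ne', Real.log_exp, hZ]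
    congr 1
    push_cast; ring
  have hI : Udag U r (σ + I * β) = Z * ((x0 ^ σ : ℝ) : ℂ) *
      ∫ u : ℝ, cexp (-π * (I * ((β / (2 * π) : ℝ) : ℂ)) * u ^ 2) * H u := by
    rw [Udag_exp]
    have h := integral_image_eq_integral_abs_deriv_smul (s := Set.univ)
      (f := fun u => Real.log x0 + T u)
      (f' := deriv T) MeasurableSet.univ (fun u _ =>
        (((Tc.differentiable (by simp) u).hasDerivAt).const_add _).hasDerivWithinAt)
      (fun u _ v _ huv => Tm.injective (by simpa using huv))
      (fun t : ℝ => ((Real.exp (σ * t) * U (Real.exp t) : ℝ) : ℂ) *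
      cexp (I * ((β * t - 2 * π * r * Real.exp t : ℝ) : ℂ)))
    have hsurj : (fun u => Real.log x0 + T u) '' Set.univ = Set.univ := by
      rw [Set.image_univ, Set.range_eq_univ]
      intro y
      obtain ⟨u, hu⟩ := Ts (y - Real.log x0)
      exact ⟨u, by simp [hu]⟩
    rw [hsurj, setIntegral_univ, setIntegral_univ] at h
    rw [h, ← integral_const_mul]
    congr 1
    ext u
    have e1 : Real.exp (Real.log x0 + T u) = x0 * E u := by
      rw [Real.exp_add, Real.exp_log hx0p]
    have e2 : Real.exp (σ * (Real.log x0 + T u)) = x0 ^ σ * Real.exp (σ * T u) := by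
      rw [Real.rpow_def_of_pos hx0p, ← Real.exp_add]; congr 1; ring
    have e3 : cexp (I * ((β * (Real.log x0 + T u) - 2 * π * r * (x0 * E u) : ℝ) : ℂ)) =
        Z * cexp (-π * (I * ((β / (2 * π) : ℝ) : ℂ)) * u ^ 2) := by
      rw [hZ, ← Complex.exp_add]
      congr 1
      have h1 : β * (Real.log x0 + T u) - 2 * π * r * (x0 * E u) =
          (β * Real.log x0 - β) - β * (u ^ 2 / 2) := by
        have : 2 * π * r * (x0 * E u) = β * E u := by rw [← mul_assoc, hrx]
        rw [this, ← Trel u]; ring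
      rw [h1]
      have : (π : ℂ) ≠ 0 := by exact_mod_cast Real.pi_ne_zero
      push_cast
      field_simp
      ring
    rw [e1, e2, e3, abs_of_nonneg (Tnn u), Complex.real_smul]
    simp only [hH, hW]
    push_cast
    ring
  rw [const_eq β hβ, hpow, hI]
  have hfac : Z * ((x0 ^ σ : ℝ) : ℂ) * (∫ u : ℝ, cexp (-π * (I * ((β / (2 * π) : ℝ) : ℂ)) * u ^ 2) * H u) -
      1 / (I * ((β / (2 * π) : ℝ) : ℂ)) ^ (1 / 2 : ℂ) * Z * ((x0 ^ σ * U x0 : ℝ) : ℂ) =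
      Z * ((x0 ^ σ : ℝ) : ℂ) * ((∫ u : ℝ, cexp (-π * (I * ((β / (2 * π) : ℝ) : ℂ)) * u ^ 2) * H u) -
      1 / (I * ((β / (2 * π) : ℝ) : ℂ)) ^ (1 / 2 : ℂ) * (U x0 : ℂ)) := by
    push_cast; ring
  rw [hfac, norm_mul, norm_mul, hZn, one_mul, Complex.norm_real, mul_assoc]
  have hyb : |β / (2 * π)| ^ (-(3:ℝ)/2) = (2 * π) ^ ((3:ℝ)/2) * |β| ^ (-(3:ℝ)/2) := by
    rw [abs_div, abs_of_pos (show 0 < 2 * π by positivity), Real.div_rpow (abs_nonneg _) (by positivity),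
      neg_div, Real.rpow_neg (show 0 ≤ 2 * π by positivity), div_inv_eq_mul, mul_comm]
  rw [hyb, ← mul_assoc (π * _)] at hG
  exact mul_le_mul ((hP x0 hx).trans (le_abs_self P)) hG (norm_nonneg _) (abs_nonneg _)

lemma ends_zero (f : ℝ → ℝ) (hf : Continuous f) (a b : ℝ) (h : ∀ x, x ∉ Set.Icc a b → f x = 0) :
    f a = 0 ∧ f b = 0 := by
  constructor
  · have h1 : Set.EqOn f (fun _ => 0) (Set.Iio a) := fun x hx => h x (fun hh => not_lt.2 hh.1 hx)
    have := h1.closure hf continuous_const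
    rw [closure_Iio] at this
    exact this Set.self_mem_Iic
  · have h1 : Set.EqOn f (fun _ => 0) (Set.Ioi b) := fun x hx => h x (fun hh => not_lt.2 hh.2 hx)
    have := h1.closure hf continuous_const
    rw [closure_Ioi] at this
    exact this Set.self_mem_Ici

lemma lower_bound (a b r β x : ℝ) (ha : 0 < a) (hr : r ≠ 0)
    (hx : x ∈ Set.Icc a b) (h0 : β / (2 * π * r) ∉ Set.Icc (a / 2) (2 * b)) :
    |β| / 2 ≤ |β - 2 * π * r * x| ∧ π * a * |r| ≤ |β - 2 * π * r * x| := by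
  obtain ⟨hxa, hxb⟩ := hx
  have hpi := Real.pi_pos
  have hx0 : 0 < x := ha.trans_le hxa
  set z := β / (2 * π * r) with hz
  have hβz : β = 2 * π * r * z := by rw [hz]; field_simp
  have h1 : |β - 2 * π * r * x| = 2 * π * |r| * |z - x| := by
    rw [hβz, ← mul_sub, abs_mul, abs_mul, abs_mul, abs_of_pos hpi]; norm_num
  have h2 : |β| = 2 * π * |r| * |z| := by
    rw [hβz, abs_mul, abs_mul, abs_mul, abs_of_pos hpi]; norm_num
  have h3 : |z| / 2 ≤ |z - x| ∧ a / 2 ≤ |z - x| := by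
    rw [Set.mem_Icc, not_and_or, not_le, not_le] at h0
    rcases h0 with h | h
    · have : |z - x| = x - z := by rw [abs_sub_comm, abs_of_pos]; linarith
      rw [this]
      refine ⟨?_, by linarith⟩
      rcases abs_cases z with ⟨h4, h5⟩ | ⟨h4, h5⟩ <;> rw [h4] <;> linarith
    · have : |z - x| = z - x := by rw [abs_of_pos]; linarith
      rw [this, abs_of_pos (by linarith)]
      constructor <;> linarith
  have hr0 : 0 ≤ 2 * π * |r| := by positivity
  rw [h1, h2]
  constructor
  · have := mul_le_mul_of_nonneg_left h3.1 hr0; linarith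
  · have := mul_le_mul_of_nonneg_left h3.2 hr0; linarith

lemma ibp (la lb r β ρ N : ℝ) (hl : la ≤ lb) (hρ : 0 ≤ ρ) (h h1 h2 : ℝ → ℝ)
    (hd : ∀ t, HasDerivAt h (h1 t) t) (hd1 : ∀ t, HasDerivAt h1 (h2 t) t) (hc2 : Continuous h2)
    (e0 : h la = 0) (e1 : h lb = 0) (e2 : h1 la = 0) (e3 : h1 lb = 0)
    (b0 : ∀ t ∈ Set.Icc la lb, |h t| ≤ N) (b1 : ∀ t ∈ Set.Icc la lb, |h1 t| ≤ N)
    (b2 : ∀ t ∈ Set.Icc la lb, |h2 t| ≤ N) (δ : ℝ) (hδ : 0 < δ)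
    (hD : ∀ t ∈ Set.Icc la lb, δ ≤ |β - 2 * π * r * Real.exp t|)
    (hD' : ∀ t ∈ Set.Icc la lb, |2 * π * r * Real.exp t| ≤ ρ * |β - 2 * π * r * Real.exp t|) :
    ‖∫ t in la..lb, (h t : ℂ) * cexp (I * ((β * t - 2 * π * r * Real.exp t : ℝ) : ℂ))‖ ≤
      (N * (1 + 4 * ρ + 3 * ρ ^ 2)) * (δ ^ 2)⁻¹ * (lb - la) := by
  have hN : 0 ≤ N := (abs_nonneg _).trans (b0 la ⟨le_rfl, hl⟩)
  set D : ℝ → ℝ := fun t => β - 2 * π * r * Real.exp t with hDdef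
  set D1 : ℝ → ℝ := fun t => -(2 * π * r * Real.exp t) with hD1def
  have dD : ∀ t, HasDerivAt D (D1 t) t := fun t => ((Real.hasDerivAt_exp t).const_mul _).const_sub β
  have dD1 : ∀ t, HasDerivAt D1 (D1 t) t := fun t => ((Real.hasDerivAt_exp t).const_mul _).neg
  set w : ℝ → ℝ := fun t => (D t)⁻¹ with hw
  have Dne : ∀ t ∈ Set.Icc la lb, D t ≠ 0 := fun t ht h0 => by
    have := hD t ht
    change δ ≤ |D t| at this
    rw [h0, abs_zero] at this; linarith
  have dw : ∀ t ∈ Set.Icc la lb, HasDerivAt w (-D1 t * w t ^ 2) t := fun t ht => by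
    have := (dD t).inv (Dne t ht)
    refine this.congr_deriv ?_
    change _ = -D1 t * ((D t)⁻¹) ^ 2
    rw [inv_pow]; ring
  set B' : ℝ → ℝ := fun t => h2 t * w t ^ 2 - 3 * h1 t * D1 t * w t ^ 3 - h t * D1 t * w t ^ 3
    + 3 * h t * D1 t ^ 2 * w t ^ 4 with hB'
  set Φ : ℝ → ℝ := fun t => β * t - 2 * π * r * Real.exp t with hΦ
  have dΦ : ∀ t, HasDerivAt Φ (D t) t := fun t => by
    have := ((hasDerivAt_id t).const_mul β).sub ((Real.hasDerivAt_exp t).const_mul (2 * π * r))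
    exact this.congr_deriv (by simp [hDdef])
  set F : ℝ → ℂ := fun t => (-I * ((h t * w t : ℝ) : ℂ) +
    ((h1 t * w t ^ 2 - h t * D1 t * w t ^ 3 : ℝ) : ℂ)) * cexp (I * (Φ t : ℂ)) with hF
  have dF : ∀ t ∈ Set.uIcc la lb,
      HasDerivAt F (((h t : ℂ) + (B' t : ℂ)) * cexp (I * (Φ t : ℂ))) t := by
    intro t ht
    rw [Set.uIcc_of_le hl] at ht
    have wD : (w t : ℂ) * (D t : ℂ) = 1 := by
      exact_mod_cast inv_mul_cancel₀ (Dne t ht)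
    have q1 := ((hd t).mul (dw t ht)).ofReal_comp.const_mul (-I)
    have q2 := (((hd1 t).mul ((dw t ht).pow 2)).sub
      (((hd t).mul (dD1 t)).mul ((dw t ht).pow 3))).ofReal_comp
    have q3 := ((dΦ t).ofReal_comp.const_mul I).cexp
    have q4 := (q1.add q2).mul q3
    refine q4.congr_deriv ?_
    simp only [hB', Pi.mul_apply, Pi.pow_apply, Pi.sub_apply, Pi.add_apply]
    push_cast
    linear_combination (cexp (I * (Φ t : ℂ)) * (-I ^ 2 * h t + I * (h1 t * w t - h t * D1 t * w t ^ 2))) * wD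
      - cexp (I * (Φ t : ℂ)) * h t * Complex.I_sq
  have ch : Continuous h := continuous_iff_continuousAt.2 fun t => (hd t).continuousAt
  have ch1 : Continuous h1 := continuous_iff_continuousAt.2 fun t => (hd1 t).continuousAt
  have cD1 : Continuous D1 := by fun_prop
  have cΦ : Continuous Φ := by fun_prop
  have cw : ContinuousOn w (Set.uIcc la lb) := by
    rw [Set.uIcc_of_le hl]
    exact fun t ht => (dw t ht).continuousAt.continuousWithinAt
  have cB' : ContinuousOn B' (Set.uIcc la lb) := by
    have := ch.continuousOn (s := Set.uIcc la lb)
    have := ch1.continuousOn (s := Set.uIcc la lb)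
    have := hc2.continuousOn (s := Set.uIcc la lb)
    have := cD1.continuousOn (s := Set.uIcc la lb)
    fun_prop
  have ce : Continuous (fun t => cexp (I * (Φ t : ℂ))) := by fun_prop
  have i1 : IntervalIntegrable (fun t => (h t : ℂ) * cexp (I * (Φ t : ℂ))) volume la lb := by
    apply Continuous.intervalIntegrable; fun_prop
  have i2 : IntervalIntegrable (fun t => (B' t : ℂ) * cexp (I * (Φ t : ℂ))) volume la lb := by
    apply ContinuousOn.intervalIntegrable
    exact (Complex.continuous_ofReal.comp_continuousOn cB').mul ce.continuousOn
  have hFTC := intervalIntegral.integral_eq_sub_of_hasDerivAt dF (by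
    simpa only [add_mul] using i1.add i2)
  have hFb : F lb = 0 := by simp [hF, e1, e3]
  have hFa : F la = 0 := by simp [hF, e0, e2]
  rw [hFb, hFa, sub_zero] at hFTC
  simp only [add_mul] at hFTC
  rw [intervalIntegral.integral_add i1 i2] at hFTC
  rw [eq_neg_of_add_eq_zero_left hFTC, norm_neg]
  refine (intervalIntegral.norm_integral_le_of_norm_le_const
    (C := (N * (1 + 4 * ρ + 3 * ρ ^ 2)) * (δ ^ 2)⁻¹) ?_).trans (by rw [abs_of_nonneg (sub_nonneg.2 hl)])
  intro t ht
  rw [Set.uIoc_of_le hl] at ht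
  have ht : t ∈ Set.Icc la lb := ⟨ht.1.le, ht.2⟩
  rw [norm_mul, mul_comm I, Complex.norm_exp_ofReal_mul_I, mul_one, Complex.norm_real, Real.norm_eq_abs]
  have hDw : |D1 t * w t| ≤ ρ := by
    have := hD' t ht
    change |2 * π * r * Real.exp t| ≤ ρ * |D t| at this
    rw [abs_mul, hD1def, abs_neg, hw, abs_inv, ← div_eq_mul_inv, div_le_iff₀ (abs_pos.2 (Dne t ht))]
    exact this
  have hw2 : w t ^ 2 ≤ (δ ^ 2)⁻¹ := by
    simp only [hw]; rw [inv_pow]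
    apply inv_anti₀ (by positivity)
    rw [← sq_abs (D t)]
    exact pow_le_pow_left₀ hδ.le (hD t ht) 2
  have hfac : B' t = (h2 t - 3 * h1 t * (D1 t * w t) - h t * (D1 t * w t)
    + 3 * h t * (D1 t * w t) ^ 2) * w t ^ 2 := by simp only [hB']; ring
  rw [hfac, abs_mul, abs_of_nonneg (sq_nonneg (w t))]
  refine mul_le_mul ?_ hw2 (sq_nonneg _) (by positivity)
  set v := D1 t * w t
  have m1 : |3 * h1 t * v| ≤ 3 * N * ρ := by
    rw [abs_mul, abs_mul]
    have : |(3:ℝ)| = 3 := by norm_num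
    rw [this]; gcongr; exact b1 t ht
  have m2 : |h t * v| ≤ N * ρ := by
    rw [abs_mul]; gcongr; exact b0 t ht
  have m3 : |3 * h t * v ^ 2| ≤ 3 * N * ρ ^ 2 := by
    rw [abs_mul, abs_mul, abs_pow]
    have : |(3:ℝ)| = 3 := by norm_num
    rw [this]; gcongr; exact b0 t ht
  have m0 := b2 t ht
  calc _ ≤ |h2 t| + |3 * h1 t * v| + |h t * v| + |3 * h t * v ^ 2| :=
        (abs_add_le _ _).trans (add_le_add_left ((abs_sub _ _).trans (add_le_add_left (abs_sub _ _) _)) _)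
    _ ≤ N + 3 * N * ρ + N * ρ + 3 * N * ρ ^ 2 := by gcongr
    _ = _ := by ring

lemma caseA (a b σ : ℝ) (ha : 0 < a) (hab : a ≤ b) (K : ℕ → ℝ) :
    ∃ C, 0 ≤ C ∧ ∀ U : ℝ → ℝ, ContDiff ℝ ∞ U → tsupport U ⊆ Set.Icc a b →
      (∀ j : ℕ, ∀ x : ℝ, |iteratedDeriv j U x| ≤ K j) →
      ∀ r β : ℝ, r ≠ 0 → β / (2 * π * r) ∉ Set.Icc (a / 2) (2 * b) →
        ‖Udag U r (σ + Complex.I * β)‖ ≤ C * (max |β| |r|) ^ (-(3:ℝ)/2) := by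
  have hb : 0 < b := ha.trans_le hab
  have hl : Real.log a ≤ Real.log b := Real.log_le_log ha hab
  obtain ⟨P, hP⟩ := (isCompact_Icc (a := Real.log a) (b := Real.log b)).exists_bound_of_continuousOn
    (f := fun t : ℝ => Real.exp (σ * t)) (by fun_prop)
  set N := |P| * (|K 0| + (|σ| * |K 0| + b * |K 1|) +
    (|σ| * |σ| * |K 0| + (2 * |σ| + 1) * (b * |K 1|) + b * b * |K 2|)) with hN
  have hN0 : 0 ≤ N := by positivity
  set ρ := 2 * b / a with hρ
  have hρ0 : 0 ≤ ρ := by positivity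
  set c := min (1 / 2) (π * a) with hc
  have hc0 : 0 < c := lt_min (by norm_num) (by positivity)
  set C1 := N * (1 + 4 * ρ + 3 * ρ ^ 2) * (c ^ 2)⁻¹ * (Real.log b - Real.log a) with hC1
  set C2 := N * (Real.log b - Real.log a) with hC2
  have hlba : 0 ≤ Real.log b - Real.log a := sub_nonneg.2 hl
  have hC10 : 0 ≤ C1 := by positivity
  have hC20 : 0 ≤ C2 := by positivity
  refine ⟨C1 + C2, by positivity, ?_⟩
  intro U hU hUs hK r β hr hx
  have hU1 : ContDiff ℝ ∞ (deriv U) := (contDiff_infty_iff_deriv.1 hU).2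
  have hU2 : ContDiff ℝ ∞ (deriv (deriv U)) := (contDiff_infty_iff_deriv.1 hU1).2
  have dU : ∀ x, HasDerivAt U (deriv U x) x := fun x => (hU.differentiable (by simp) x).hasDerivAt
  have dU1 : ∀ x, HasDerivAt (deriv U) (deriv (deriv U) x) x :=
    fun x => (hU1.differentiable (by simp) x).hasDerivAt
  have cU := hU.continuous
  have cU1 := hU1.continuous
  have cU2 := hU2.continuous
  have k0 : ∀ x, |U x| ≤ |K 0| := fun x => by
    have := hK 0 x; rw [iteratedDeriv_zero] at this; exact this.trans (le_abs_self _)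
  have k1 : ∀ x, |deriv U x| ≤ |K 1| := fun x => by
    have := hK 1 x; rw [iteratedDeriv_one] at this; exact this.trans (le_abs_self _)
  have k2 : ∀ x, |deriv (deriv U) x| ≤ |K 2| := fun x => by
    have := hK 2 x; rw [iteratedDeriv_succ, iteratedDeriv_one] at this
    exact this.trans (le_abs_self _)
  have z0 : ∀ x, x ∉ Set.Icc a b → U x = 0 := fun x hx => by
    by_contra h; exact hx (hUs (subset_tsupport _ h))
  have z1 : ∀ x, x ∉ Set.Icc a b → deriv U x = 0 := fun x hx => by
    by_contra h; exact hx (hUs (support_deriv_subset h))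
  obtain ⟨za0, zb0⟩ := ends_zero U cU a b z0
  obtain ⟨za1, zb1⟩ := ends_zero (deriv U) cU1 a b z1
  set h : ℝ → ℝ := fun t => Real.exp (σ * t) * U (Real.exp t) with hh
  set h1 : ℝ → ℝ := fun t => Real.exp (σ * t) * (σ * U (Real.exp t) +
    Real.exp t * deriv U (Real.exp t)) with hh1
  set h2 : ℝ → ℝ := fun t => Real.exp (σ * t) * (σ * σ * U (Real.exp t) +
    (2 * σ + 1) * (Real.exp t * deriv U (Real.exp t)) +
      Real.exp t * Real.exp t * deriv (deriv U) (Real.exp t)) with hh2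
  have dσ : ∀ t, HasDerivAt (fun t => Real.exp (σ * t)) (Real.exp (σ * t) * σ) t := fun t => by
    have := ((hasDerivAt_id t).const_mul σ).exp
    exact this.congr_deriv (by simp)
  have dcU : ∀ t, HasDerivAt (fun t => U (Real.exp t)) (deriv U (Real.exp t) * Real.exp t) t :=
    fun t => (dU _).comp t (Real.hasDerivAt_exp t)
  have dcU1 : ∀ t, HasDerivAt (fun t => deriv U (Real.exp t))
      (deriv (deriv U) (Real.exp t) * Real.exp t) t :=
    fun t => (dU1 _).comp t (Real.hasDerivAt_exp t)
  have hd : ∀ t, HasDerivAt h (h1 t) t := fun t =>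
    ((dσ t).mul (dcU t)).congr_deriv (by simp only [hh1]; ring)
  have hd1 : ∀ t, HasDerivAt h1 (h2 t) t := fun t =>
    ((dσ t).mul (((dcU t).const_mul σ).add ((Real.hasDerivAt_exp t).mul (dcU1 t)))).congr_deriv
      (by simp only [hh2, Pi.add_apply, Pi.mul_apply]; ring)
  have ebd : ∀ t ∈ Set.Icc (Real.log a) (Real.log b), Real.exp t ∈ Set.Icc a b := fun t ht =>
    ⟨(Real.log_le_iff_le_exp ha).1 ht.1, (Real.le_log_iff_exp_le hb).1 ht.2⟩
  have eP : ∀ t ∈ Set.Icc (Real.log a) (Real.log b), |Real.exp (σ * t)| ≤ |P| := fun t ht =>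
    (hP t ht).trans (le_abs_self _)
  have n0 : 0 ≤ |K 0| := abs_nonneg _
  have n1 : 0 ≤ |σ| * |K 0| + b * |K 1| := by positivity
  have n2 : 0 ≤ |σ| * |σ| * |K 0| + (2 * |σ| + 1) * (b * |K 1|) + b * b * |K 2| := by positivity
  have eb : ∀ t ∈ Set.Icc (Real.log a) (Real.log b), |Real.exp t| ≤ b := fun t ht => by
    rw [abs_of_pos (Real.exp_pos t)]; exact (ebd t ht).2
  have b0 : ∀ t ∈ Set.Icc (Real.log a) (Real.log b), |h t| ≤ N := fun t ht => by
    simp only [hh]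
    rw [abs_mul]
    exact mul_le_mul (eP t ht) ((k0 _).trans (by linarith)) (abs_nonneg _) (abs_nonneg _)
  have eU1 : ∀ t ∈ Set.Icc (Real.log a) (Real.log b),
      |Real.exp t * deriv U (Real.exp t)| ≤ b * |K 1| := fun t ht => by
    rw [abs_mul]; exact mul_le_mul (eb t ht) (k1 _) (abs_nonneg _) hb.le
  have b1 : ∀ t ∈ Set.Icc (Real.log a) (Real.log b), |h1 t| ≤ N := fun t ht => by
    simp only [hh1]
    rw [abs_mul]
    refine mul_le_mul (eP t ht) ?_ (abs_nonneg _) (abs_nonneg _)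
    have q1 : |σ * U (Real.exp t)| ≤ |σ| * |K 0| := by
      rw [abs_mul]; exact mul_le_mul_of_nonneg_left (k0 _) (abs_nonneg _)
    have q2 := eU1 t ht
    have := abs_add_le (σ * U (Real.exp t)) (Real.exp t * deriv U (Real.exp t))
    linarith
  have b2 : ∀ t ∈ Set.Icc (Real.log a) (Real.log b), |h2 t| ≤ N := fun t ht => by
    simp only [hh2]
    rw [abs_mul]
    refine mul_le_mul (eP t ht) ?_ (abs_nonneg _) (abs_nonneg _)
    have q1 : |σ * σ * U (Real.exp t)| ≤ |σ| * |σ| * |K 0| := by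
      rw [abs_mul, abs_mul]; exact mul_le_mul_of_nonneg_left (k0 _) (by positivity)
    have q2 : |(2 * σ + 1) * (Real.exp t * deriv U (Real.exp t))| ≤ (2 * |σ| + 1) * (b * |K 1|) := by
      rw [abs_mul]
      refine mul_le_mul ?_ (eU1 t ht) (abs_nonneg _) (by positivity)
      refine (abs_add_le _ _).trans ?_
      rw [abs_mul]; simp
    have q3 : |Real.exp t * Real.exp t * deriv (deriv U) (Real.exp t)| ≤ b * b * |K 2| := by
      rw [abs_mul, abs_mul]
      have := eb t ht
      exact mul_le_mul (mul_le_mul this this (abs_nonneg _) hb.le) (k2 _) (abs_nonneg _) (by positivity)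
    refine (abs_add_le _ _).trans ?_
    have := abs_add_le (σ * σ * U (Real.exp t)) ((2 * σ + 1) * (Real.exp t * deriv U (Real.exp t)))
    linarith
  set m := max |β| |r| with hm
  have hm0 : 0 < m := lt_max_of_lt_right (abs_pos.2 hr)
  have hlow : ∀ t ∈ Set.Icc (Real.log a) (Real.log b), c * m ≤ |β - 2 * π * r * Real.exp t| := by
    intro t ht
    obtain ⟨l1, l2⟩ := lower_bound a b r β _ ha hr (ebd t ht) hx
    rw [hm, mul_max_of_nonneg _ _ hc0.le]
    refine max_le ?_ ?_
    · have := mul_le_mul_of_nonneg_right (min_le_left (1/2) (π * a)) (abs_nonneg β)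
      linarith
    · have := mul_le_mul_of_nonneg_right (min_le_right (1/2) (π * a)) (abs_nonneg r)
      linarith
  have hD' : ∀ t ∈ Set.Icc (Real.log a) (Real.log b),
      |2 * π * r * Real.exp t| ≤ ρ * |β - 2 * π * r * Real.exp t| := by
    intro t ht
    obtain ⟨l1, l2⟩ := lower_bound a b r β _ ha hr (ebd t ht) hx
    have q1 : |2 * π * r * Real.exp t| ≤ 2 * π * |r| * b := by
      rw [abs_mul, abs_mul, abs_of_pos (show 0 < 2 * π by positivity)]
      have := eb t ht
      gcongr
    have q2 : 2 * π * |r| * b = ρ * (π * a * |r|) := by rw [hρ]; field_simp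
    rw [q2] at q1
    exact q1.trans (mul_le_mul_of_nonneg_left l2 hρ0)
  have hI := ibp (Real.log a) (Real.log b) r β ρ N hl hρ0 h h1 h2 hd hd1 (by fun_prop)
    (by simp [hh, Real.exp_log ha, za0]) (by simp [hh, Real.exp_log hb, zb0])
    (by simp [hh1, Real.exp_log ha, za0, za1]) (by simp [hh1, Real.exp_log hb, zb0, zb1])
    b0 b1 b2 (c * m) (by positivity) hlow hD'
  have hT := intervalIntegral.norm_integral_le_of_norm_le_const (a := Real.log a) (b := Real.log b)
    (f := fun t => (h t : ℂ) * cexp (I * ((β * t - 2 * π * r * Real.exp t : ℝ) : ℂ))) (C := N) (by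
      intro t ht
      rw [Set.uIoc_of_le hl] at ht
      rw [norm_mul, mul_comm I, Complex.norm_exp_ofReal_mul_I, mul_one, Complex.norm_real]
      exact b0 t ⟨ht.1.le, ht.2⟩)
  rw [abs_of_nonneg hlba] at hT
  have hU : Udag U r (σ + I * β) = ∫ t in (Real.log a)..(Real.log b),
      (h t : ℂ) * cexp (I * ((β * t - 2 * π * r * Real.exp t : ℝ) : ℂ)) := by
    rw [Udag_exp, intervalIntegral.integral_of_le hl, ← integral_Icc_eq_integral_Ioc]
    symm
    apply setIntegral_eq_integral_of_forall_compl_eq_zero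
    intro t ht
    have : U (Real.exp t) = 0 := by
      apply z0
      intro hcon
      apply ht
      exact ⟨(Real.log_le_iff_le_exp ha).2 hcon.1, (Real.le_log_iff_exp_le hb).2 hcon.2⟩
    simp [hh, this]
  rw [hU]
  rcases le_total 1 m with h1m | h1m
  · have e1 : (m ^ 2)⁻¹ ≤ m ^ (-(3:ℝ)/2) := by
      rw [← Real.rpow_natCast, ← Real.rpow_neg hm0.le]
      exact Real.rpow_le_rpow_of_exponent_le h1m (by norm_num)
    refine hI.trans ?_
    calc _ = C1 * (m ^ 2)⁻¹ := by rw [hC1, mul_pow, mul_inv]; ring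
      _ ≤ C1 * m ^ (-(3:ℝ)/2) := by gcongr
      _ ≤ _ := by gcongr; linarith
  · have e1 : 1 ≤ m ^ (-(3:ℝ)/2) :=
      Real.one_le_rpow_of_pos_of_le_one_of_nonpos hm0 h1m (by norm_num)
    refine hT.trans ?_
    calc _ = C2 * 1 := by rw [hC2, mul_one]
      _ ≤ (C1 + C2) * m ^ (-(3:ℝ)/2) := by gcongr; linarith

/-- Stationary phase asymptotic for the Fourier–Mellin transform (Lemma 5 of Munshi):
for `U` smooth supported in `[a,b] ⊂ (0,∞)` with `|U^{(j)}| ≤ K_j`, and `s = σ + iβ`,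
`U†(r,s)` equals `(√(2π)e(1/8)/√(−β)) (β/(2πer))^{iβ} U₀(σ, β/(2πr))` up to an error
`O(min{|β|^{−3/2}, |r|^{−3/2}})`, where `U₀(σ,x) = x^σ U(x)`. -/
theorem stmt7 (a b σ : ℝ) (ha : 0 < a) (hab : a ≤ b) (K : ℕ → ℝ) :
    ∃ C > 0, ∀ U : ℝ → ℝ, ContDiff ℝ (⊤ : ℕ∞) U → tsupport U ⊆ Set.Icc a b →
      (∀ j : ℕ, ∀ x : ℝ, |iteratedDeriv j U x| ≤ K j) →
      ∀ r β : ℝ, r ≠ 0 → β ≠ 0 →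
        ‖Udag U r (σ + Complex.I * β)
            - ((Real.sqrt (2 * Real.pi) : ℝ) : ℂ) * e (1/8) / (((-β : ℝ) : ℂ) ^ ((1:ℂ)/2))
              * (((β / (2 * Real.pi * Real.exp 1 * r) : ℝ) : ℂ)) ^ (Complex.I * (β : ℂ))
              * ((((β / (2 * Real.pi * r)) ^ σ * U (β / (2 * Real.pi * r)) : ℝ)) : ℂ)‖
          ≤ C * min (|β| ^ (-(3:ℝ)/2)) (|r| ^ (-(3:ℝ)/2)) := by
  obtain ⟨CA, hA0, hA⟩ := caseA a b σ ha hab K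
  obtain ⟨CB, hB0, hB⟩ := caseB a b σ ha hab K
  have hb : 0 < b := ha.trans_le hab
  set Q := (π * a) ^ (-(3:ℝ)/2) with hQ
  have hQ0 : 0 ≤ Q := by positivity
  refine ⟨CA + CB * (1 + Q) + 1, by positivity, ?_⟩
  intro U hU hUs hK r β hr hβ
  have hβ0 : 0 < |β| := abs_pos.2 hβ
  have hr0 : 0 < |r| := abs_pos.2 hr
  by_cases hx : β / (2 * π * r) ∈ Set.Icc (a / 2) (2 * b)
  · refine (hB U hU hUs hK r β hr hβ hx).trans ?_
    have hβr : π * a * |r| ≤ |β| := by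
      have h1 : |β| = 2 * π * |r| * (β / (2 * π * r)) := by
        have h0 : 0 < β / (2 * π * r) := lt_of_lt_of_le (by linarith) hx.1
        conv_rhs => rw [← abs_of_pos h0]
        rw [abs_div, abs_mul, abs_of_pos (show 0 < 2 * π by positivity)]
        field_simp
      rw [h1]
      have := mul_le_mul_of_nonneg_left hx.1 (show 0 ≤ 2 * π * |r| by positivity)
      linarith
    have h2 : |β| ^ (-(3:ℝ)/2) ≤ Q * |r| ^ (-(3:ℝ)/2) := by
      rw [hQ, ← Real.mul_rpow (by positivity) (by positivity)]
      exact Real.rpow_le_rpow_of_nonpos (by positivity) hβr (by norm_num)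
    have p1 : 0 ≤ |β| ^ (-(3:ℝ)/2) := by positivity
    have p2 : 0 ≤ |r| ^ (-(3:ℝ)/2) := by positivity
    have h3 : |β| ^ (-(3:ℝ)/2) ≤ (1 + Q) * min (|β| ^ (-(3:ℝ)/2)) (|r| ^ (-(3:ℝ)/2)) := by
      rw [mul_min_of_nonneg _ _ (by positivity)]
      refine le_min ?_ ?_ <;> nlinarith
    have p3 : 0 ≤ min (|β| ^ (-(3:ℝ)/2)) (|r| ^ (-(3:ℝ)/2)) := le_min p1 p2
    have := mul_le_mul_of_nonneg_left h3 hB0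
    nlinarith
  · have hU0 : U (β / (2 * π * r)) = 0 := by
      by_contra h
      have := hUs (subset_tsupport _ h)
      exact hx ⟨by linarith [this.1], by linarith [this.2]⟩
    rw [hU0, mul_zero, Complex.ofReal_zero, mul_zero, sub_zero]
    refine (hA U hU hUs hK r β hr hx).trans ?_
    have p0 : 0 ≤ (max |β| |r|) ^ (-(3:ℝ)/2) := by positivity
    have h1 : (max |β| |r|) ^ (-(3:ℝ)/2) ≤ min (|β| ^ (-(3:ℝ)/2)) (|r| ^ (-(3:ℝ)/2)) :=
      le_min (Real.rpow_le_rpow_of_nonpos hβ0 (le_max_left _ _) (by norm_num))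
        (Real.rpow_le_rpow_of_nonpos hr0 (le_max_right _ _) (by norm_num))
    have h2 : 0 ≤ CB * (1 + Q) := by positivity
    exact mul_le_mul (by linarith) h1 p0 (by linarith)
end

section
/- Let [a,b] ⊂ (0,∞) and let U : ℝ → ℝ be a smooth function supported in [a,b] with |U^{(j)}(x)| ≤ K_j for all j ≥ 0 and all x. Fix σ ∈ ℝ and a nonnegative integer j. Then there is a constant C, depending only on a, b, σ, j and finitely many of the K_i, such that for all real r and real β, writing s = σ + iβ and U†(r,s) = ∫_0^∞ U(x) e(−rx) x^{s−1} dx, one has |U†(r,s)| ≤ C · min{ ((1+|β|)/|r|)^j , ((1+|r|)/|β|)^j } (where a quotient with zero denominator is interpreted as +∞). -/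
open Complex Real

open MeasureTheory in
lemma integrable_aux (a b : ℝ) (ha : 0 < a) (U : ℝ → ℝ) (hU : Continuous U)
    (hs : tsupport U ⊆ Set.Icc a b) (r : ℝ) (s : ℂ) :
    IntegrableOn (fun x : ℝ => (U x : ℂ) * e (-(r * x)) * (x : ℂ) ^ s) (Set.Ioi 0) := by
  have h1 : IntegrableOn (fun x : ℝ => (U x : ℂ) * e (-(r * x)) * (x : ℂ) ^ s) (Set.Icc a b) := by
    apply ContinuousOn.integrableOn_Icc
    intro x hx
    have hx0 : 0 < x := lt_of_lt_of_le ha hx.1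
    apply ContinuousAt.continuousWithinAt
    have h2 : ContinuousAt (fun x : ℝ => (x : ℂ) ^ s) x :=
      Complex.continuousAt_ofReal_cpow_const x s (Or.inr hx0.ne')
    have h3 : Continuous (fun x : ℝ => (U x : ℂ) * e (-(r * x))) := by
      unfold e; fun_prop
    exact h3.continuousAt.mul h2
  refine h1.of_forall_sdiff_eq_zero measurableSet_Ioi ?_
  intro x hx
  have : U x = 0 := image_eq_zero_of_notMem_tsupport (fun h => hx.2 (hs h))
  simp [this]

lemma tsupport_deriv_aux (a b : ℝ) (U : ℝ → ℝ)
    (hs : tsupport U ⊆ Set.Icc a b) : tsupport (deriv U) ⊆ Set.Icc a b :=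
  (closure_minimal support_deriv_subset (isClosed_tsupport U)).trans hs

open MeasureTheory Filter Topology in
lemma parts_aux (a b : ℝ) (ha : 0 < a) (U : ℝ → ℝ) (hU : ContDiff ℝ (⊤ : ℕ∞) U)
    (hs : tsupport U ⊆ Set.Icc a b) (r : ℝ) (s : ℂ) :
    Udag (deriv U) r (s + 1) - 2 * Real.pi * Complex.I * r * Udag U r (s + 1)
      + s * Udag U r s = 0 := by
  have hd : ContDiff ℝ (⊤ : ℕ∞) (deriv U) := (contDiff_infty_iff_deriv.1 hU).2
  have i1 := integrable_aux a b ha (deriv U) hd.continuous (tsupport_deriv_aux a b U hs) r (s + 1 - 1)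
  have i2 := integrable_aux a b ha U hU.continuous hs r (s + 1 - 1)
  have i3 := integrable_aux a b ha U hU.continuous hs r (s - 1)
  have i2' := i2.const_mul (2 * Real.pi * Complex.I * r)
  have i3' := i3.const_mul s
  have i12 : IntegrableOn (fun x : ℝ => ((deriv U x : ℝ) : ℂ) * e (-(r * x)) * (x : ℂ) ^ (s + 1 - 1)
      - 2 * Real.pi * Complex.I * r * ((U x : ℂ) * e (-(r * x)) * (x : ℂ) ^ (s + 1 - 1)))
      (Set.Ioi 0) := i1.sub i2'
  have key := integral_Ioi_of_hasDerivAt_of_tendsto (a := (0:ℝ)) (m := (0:ℂ))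
    (f := fun x : ℝ => (U x : ℂ) * e (-(r * x)) * (x : ℂ) ^ s)
    (f' := fun x : ℝ => ((deriv U x : ℝ) : ℂ) * e (-(r * x)) * (x : ℂ) ^ (s + 1 - 1)
      - 2 * Real.pi * Complex.I * r * ((U x : ℂ) * e (-(r * x)) * (x : ℂ) ^ (s + 1 - 1))
      + s * ((U x : ℂ) * e (-(r * x)) * (x : ℂ) ^ (s - 1))) ?_ ?_ ?_ ?_
  · have h0 : U 0 = 0 := image_eq_zero_of_notMem_tsupport (fun h => by
      have := (hs h).1; linarith)
    rw [integral_add i12 i3', integral_sub i1 i2',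
      integral_const_mul, integral_const_mul] at key
    simpa [Udag, h0] using key
  · apply ContinuousAt.continuousWithinAt
    have : (fun x : ℝ => (U x : ℂ) * e (-(r * x)) * (x : ℂ) ^ s) =ᶠ[𝓝 0] fun _ => 0 := by
      filter_upwards [Iio_mem_nhds ha] with x hx
      have : U x = 0 := image_eq_zero_of_notMem_tsupport (fun h => by
        have := (hs h).1; simp at hx; linarith)
      simp [this]
    exact continuousAt_const.congr this.symm
  · intro x hx
    have hx0 : (0:ℝ) < x := hx
    have d1 : HasDerivAt (fun x : ℝ => (U x : ℂ)) ((deriv U x : ℝ) : ℂ) x :=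
      ((hU.differentiable (by simp)) x).hasDerivAt.ofReal_comp
    have d2 : HasDerivAt (fun x : ℝ => e (-(r * x))) (e (-(r * x)) * (2 * Real.pi * Complex.I * (-r : ℝ))) x := by
      unfold e
      apply HasDerivAt.cexp
      apply HasDerivAt.const_mul
      apply HasDerivAt.ofReal_comp
      simpa using (hasDerivAt_id x).const_mul (-r)
    have d3 : HasDerivAt (fun x : ℝ => (x : ℂ) ^ s) (s * (x : ℂ) ^ (s - 1)) x := by
      have := (hasDerivAt_id (x : ℂ)).cpow_const (c := s) (Or.inl (by simpa using hx0))
      simpa using this.comp_ofReal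
    refine ((d1.mul d2).mul d3).congr_deriv ?_
    simp only [add_sub_cancel_right, Pi.mul_apply]
    push_cast
    ring
  · exact i12.add i3'
  · refine tendsto_const_nhds.congr' ?_
    filter_upwards [eventually_gt_atTop b] with x hx
    have : U x = 0 := image_eq_zero_of_notMem_tsupport (fun h => by
      have := (hs h).2; linarith)
    simp [this]

lemma norm_e_aux (x : ℝ) : ‖e x‖ = 1 := by
  unfold e
  have : (2 * Real.pi * Complex.I * x : ℂ) = ((2 * Real.pi * x : ℝ) : ℂ) * Complex.I := by
    push_cast; ring
  rw [this, Complex.norm_exp_ofReal_mul_I]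

open MeasureTheory in
lemma base_aux (a b : ℝ) (ha : 0 < a) (σ M : ℝ) :
    ∃ C > 0, ∀ U : ℝ → ℝ, tsupport U ⊆ Set.Icc a b → (∀ x, |U x| ≤ M) →
      ∀ r β : ℝ, ‖Udag U r (σ + Complex.I * β)‖ ≤ C := by
  refine ⟨|∫ x in Set.Icc a b, M * x ^ (σ - 1)| + 1, by positivity, ?_⟩
  intro U hs hM r β
  have h1 : Udag U r (σ + Complex.I * β) = ∫ x in Set.Icc a b,
      (U x : ℂ) * e (-(r * x)) * (x : ℂ) ^ ((σ + Complex.I * β : ℂ) - 1) := by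
    unfold Udag
    refine setIntegral_eq_of_subset_of_forall_sdiff_eq_zero measurableSet_Ioi ?_ ?_
    · intro x hx
      exact lt_of_lt_of_le ha hx.1
    · intro x hx
      have : U x = 0 := image_eq_zero_of_notMem_tsupport (fun h => hx.2 (hs h))
      simp [this]
  rw [h1]
  have h2 : IntegrableOn (fun x : ℝ => M * x ^ (σ - 1)) (Set.Icc a b) := by
    apply ContinuousOn.integrableOn_Icc
    intro x hx
    have hx0 : 0 < x := lt_of_lt_of_le ha hx.1
    apply ContinuousAt.continuousWithinAt
    exact continuousAt_const.mul (Real.continuousAt_rpow_const x _ (Or.inl hx0.ne'))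
  refine (norm_integral_le_of_norm_le h2 ?_).trans ((le_abs_self _).trans (by linarith))
  refine (ae_restrict_iff' measurableSet_Icc).2 (Filter.Eventually.of_forall ?_)
  intro x hx
  have hx0 : 0 < x := lt_of_lt_of_le ha hx.1
  rw [norm_mul, norm_mul, norm_e_aux, Complex.norm_cpow_eq_rpow_re_of_pos hx0, Complex.norm_real]
  simp only [mul_one, Complex.sub_re, Complex.add_re, Complex.ofReal_re, Complex.mul_re,
    Complex.I_re, Complex.I_im, Complex.ofReal_im, Complex.one_re, zero_mul, mul_zero, sub_zero,
    add_zero, Real.norm_eq_abs]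
  exact mul_le_mul_of_nonneg_right (hM x) (Real.rpow_nonneg hx0.le _)

/-- Repeated integration by parts bound for the Fourier–Mellin transform: for `U` smooth
supported in `[a,b] ⊂ (0,∞)` with `|U^{(i)}| ≤ K_i`, and `s = σ + iβ`,
`|U†(r,s)| ≤ C · min{((1+|β|)/|r|)^j, ((1+|r|)/|β|)^j}`, a quotient with zero denominator
being interpreted as `+∞` (so each bound is only asserted when its denominator is nonzero). -/
theorem stmt8 (a b σ : ℝ) (j : ℕ) (ha : 0 < a) (hab : a ≤ b) (K : ℕ → ℝ) :
    ∃ C > 0, ∀ U : ℝ → ℝ, ContDiff ℝ (⊤ : ℕ∞) U → tsupport U ⊆ Set.Icc a b →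
      (∀ i : ℕ, ∀ x : ℝ, |iteratedDeriv i U x| ≤ K i) →
      ∀ r β : ℝ,
        (r ≠ 0 → ‖Udag U r (σ + Complex.I * β)‖ ≤ C * ((1 + |β|) / |r|) ^ j) ∧
        (β ≠ 0 → ‖Udag U r (σ + Complex.I * β)‖ ≤ C * ((1 + |r|) / |β|) ^ j) := by
  induction j generalizing σ K with
  | zero =>
    obtain ⟨C, hC, h⟩ := base_aux a b ha σ (K 0)
    refine ⟨C, hC, fun U _ hs hK r β => ?_⟩
    have := h U hs (fun x => by simpa using hK 0 x) r β
    simpa using ⟨fun _ => this, fun _ => this⟩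
  | succ j ih =>
    obtain ⟨C1, hC1, h1⟩ := ih σ (fun i => K (i + 1))
    obtain ⟨C2, hC2, h2⟩ := ih (σ - 1) K
    obtain ⟨C3, hC3, h3⟩ := ih (σ + 1) (fun i => K (i + 1))
    obtain ⟨C4, hC4, h4⟩ := ih (σ + 1) K
    have hpi := Real.pi_gt_three
    refine ⟨(C1 + (|σ| + 1) * C2) + (C3 + 2 * Real.pi * C4), by positivity, ?_⟩
    intro U hU hs hK r β
    have hd : ContDiff ℝ (⊤ : ℕ∞) (deriv U) := (contDiff_infty_iff_deriv.1 hU).2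
    have hds := tsupport_deriv_aux a b U hs
    have hdK : ∀ i : ℕ, ∀ x : ℝ, |iteratedDeriv i (deriv U) x| ≤ K (i + 1) := by
      intro i x
      rw [← iteratedDeriv_succ']
      exact hK (i + 1) x
    constructor
    · intro hr
      have hr0 : 0 < |r| := abs_pos.2 hr
      have b1 := (h1 (deriv U) hd hds hdK r β).1 hr
      have b2 := (h2 U hU hs hK r β).1 hr
      have p := parts_aux a b ha U hU hs r (((σ - 1 : ℝ) : ℂ) + Complex.I * β)
      have es : ((σ - 1 : ℝ) : ℂ) + Complex.I * β + 1 = σ + Complex.I * β := by push_cast; ring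
      rw [es] at p
      have p' : 2 * Real.pi * Complex.I * r * Udag U r (σ + Complex.I * β) =
          Udag (deriv U) r (σ + Complex.I * β) +
          (((σ - 1 : ℝ) : ℂ) + Complex.I * β) * Udag U r (((σ - 1 : ℝ) : ℂ) + Complex.I * β) := by
        linear_combination -p
      have n := norm_add_le (Udag (deriv U) r (σ + Complex.I * β))
        ((((σ - 1 : ℝ) : ℂ) + Complex.I * β) * Udag U r (((σ - 1 : ℝ) : ℂ) + Complex.I * β))
      rw [← p', norm_mul, norm_mul (((σ - 1 : ℝ) : ℂ) + Complex.I * β)] at n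
      have ns : ‖((σ - 1 : ℝ) : ℂ) + Complex.I * β‖ ≤ (|σ| + 1) * (1 + |β|) := by
        refine (norm_add_le _ _).trans ?_
        rw [norm_mul, Complex.norm_real, Complex.norm_real, Complex.norm_I, Real.norm_eq_abs,
          Real.norm_eq_abs]
        have := abs_sub σ 1
        rw [abs_one] at this
        nlinarith [abs_nonneg σ, abs_nonneg β, mul_nonneg (abs_nonneg σ) (abs_nonneg β)]
      have nr : ‖(2 * Real.pi * Complex.I * r : ℂ)‖ = 2 * Real.pi * |r| := by
        simp [abs_of_pos Real.pi_pos]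
      rw [nr] at n
      set X := ((1 + |β|) / |r|) ^ j with hX
      have hX0 : 0 ≤ X := by positivity
      set N := ‖Udag U r (σ + Complex.I * β)‖ with hN
      have hN0 : 0 ≤ N := norm_nonneg _
      have m := mul_le_mul ns b2 (norm_nonneg _) (by positivity)
      have l : |r| * N ≤ 2 * Real.pi * |r| * N := by
        nlinarith [mul_nonneg hr0.le hN0]
      have f : |r| * N ≤ ((C1 + (|σ| + 1) * C2) + (C3 + 2 * Real.pi * C4)) * (X * (1 + |β|)) := by
        have q1 : 0 ≤ C1 * X * |β| := by positivity
        have q2 : 0 ≤ (C3 + 2 * Real.pi * C4) * (X * (1 + |β|)) := by positivity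
        linarith
      rw [pow_succ, ← hX, ← mul_div_assoc, ← mul_div_assoc, le_div_iff₀ hr0, mul_comm N]
      exact f
    · intro hβ
      have hβ0 : 0 < |β| := abs_pos.2 hβ
      have b1 := (h3 (deriv U) hd hds hdK r β).2 hβ
      have b2 := (h4 U hU hs hK r β).2 hβ
      have p := parts_aux a b ha U hU hs r (σ + Complex.I * β)
      have es : (σ : ℂ) + Complex.I * β + 1 = ((σ + 1 : ℝ) : ℂ) + Complex.I * β := by
        push_cast; ring
      rw [es] at p
      have p' : (σ + Complex.I * β) * Udag U r (σ + Complex.I * β) =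
          2 * Real.pi * Complex.I * r * Udag U r (((σ + 1 : ℝ) : ℂ) + Complex.I * β) -
          Udag (deriv U) r (((σ + 1 : ℝ) : ℂ) + Complex.I * β) := by
        linear_combination p
      have n := norm_sub_le
        (2 * Real.pi * Complex.I * r * Udag U r (((σ + 1 : ℝ) : ℂ) + Complex.I * β))
        (Udag (deriv U) r (((σ + 1 : ℝ) : ℂ) + Complex.I * β))
      rw [← p', norm_mul, norm_mul (2 * Real.pi * Complex.I * r : ℂ)] at n
      have ns : |β| ≤ ‖(σ : ℂ) + Complex.I * β‖ := by
        simpa using Complex.abs_im_le_norm ((σ : ℂ) + Complex.I * β)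
      have nr : ‖(2 * Real.pi * Complex.I * r : ℂ)‖ = 2 * Real.pi * |r| := by
        simp [abs_of_pos Real.pi_pos]
      rw [nr] at n
      set X := ((1 + |r|) / |β|) ^ j with hX
      have hX0 : 0 ≤ X := by positivity
      set N := ‖Udag U r (σ + Complex.I * β)‖ with hN
      have hN0 : 0 ≤ N := norm_nonneg _
      have m := mul_le_mul_of_nonneg_left b2 (show 0 ≤ 2 * Real.pi * |r| by positivity)
      have l := mul_le_mul_of_nonneg_right ns hN0
      have f : |β| * N ≤ ((C1 + (|σ| + 1) * C2) + (C3 + 2 * Real.pi * C4)) * (X * (1 + |r|)) := by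
        have q1 : 0 ≤ C3 * X * |r| := by positivity
        have q3 : 0 ≤ 2 * Real.pi * C4 * X := by positivity
        have q2 : 0 ≤ (C1 + (|σ| + 1) * C2) * (X * (1 + |r|)) := by positivity
        linarith
      rw [pow_succ, ← hX, ← mul_div_assoc, ← mul_div_assoc, le_div_iff₀ hβ0, mul_comm N]
      exact f
end

section
/- Let q̂₁, q̂₂ be positive integers and m₁, m₂ integers, and define 𝔠 = Σ_{β mod q̂₁q̂₂} S(m₁, β; q̂₁) · S(m₂, β; q̂₂), where S(m, n; c) = Σ_{x mod c, gcd(x,c)=1} e((mx + n·x̄)/c) is the Kloosterman sum. Then 𝔠 = 0 unless q̂₁ = q̂₂; and if q̂₁ = q̂₂ = q, then |𝔠| ≤ q² · gcd(q, m₁ − m₂). -/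
open Complex Real

/-- The Kloosterman sum `S(m,n;c) = Σ_{x mod c, (x,c)=1} e((mx + n·x̄)/c)`, where `x̄` is the
multiplicative inverse of `x` modulo `c`. -/
noncomputable def kloos (m n : ℤ) (c : ℕ) : ℂ :=
  ∑ x ∈ (Finset.range c).filter (fun x => Nat.gcd x c = 1),
    e (((m : ℝ) * (x : ℝ) + (n : ℝ) * ((((x : ZMod c)⁻¹).val : ℕ) : ℝ)) / (c : ℝ))

/-- Sum of a function over reduced residues as a sum over units. -/
lemma sum_units {N : ℕ} [NeZero N] (f : ℕ → ℂ) :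
    ∑ x ∈ (Finset.range N).filter (fun x => Nat.gcd x N = 1), f x
      = ∑ u : (ZMod N)ˣ, f (u : ZMod N).val := by
  symm
  refine Finset.sum_bij (fun u _ => (u : ZMod N).val) ?_ ?_ ?_ ?_
  · intro u _
    simp only [Finset.mem_filter, Finset.mem_range]
    exact ⟨ZMod.val_lt _, ZMod.val_coe_unit_coprime u⟩
  · intro u _ v _ h
    exact Units.ext (ZMod.val_injective N h)
  · intro x hx
    simp only [Finset.mem_filter, Finset.mem_range] at hx
    refine ⟨ZMod.unitOfCoprime x hx.2, Finset.mem_univ _, ?_⟩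
    rw [ZMod.coe_unitOfCoprime, ZMod.val_natCast, Nat.mod_eq_of_lt hx.1]
  · intros; rfl

lemma sum_primitiveRoots (N : ℕ) (hN : 0 < N) :
    ∑ z ∈ primitiveRoots N ℂ, z = (ArithmeticFunction.moebius N : ℂ) := by
  have key : ∀ n : ℕ, 0 < n → ∑ d ∈ n.divisors, (∑ z ∈ primitiveRoots d ℂ, z)
      = if n = 1 then (1 : ℂ) else 0 := by
    intro n hn
    have : NeZero n := ⟨hn.ne'⟩
    have hp := Complex.isPrimitiveRoot_exp n hn.ne'
    rw [← Finset.sum_biUnion, ← IsPrimitiveRoot.nthRoots_one_eq_biUnion_primitiveRoots]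
    · have : Polynomial.nthRootsFinset n (1 : ℂ) = (Finset.range n).image
          (fun i => (Complex.exp (2 * Real.pi * Complex.I / n)) ^ i) := by
        ext z
        rw [Polynomial.mem_nthRootsFinset hn]
        simp only [Finset.mem_image, Finset.mem_range]
        constructor
        · intro h; exact hp.eq_pow_of_pow_eq_one h
        · rintro ⟨i, _, rfl⟩
          rw [← pow_mul, mul_comm i n, pow_mul, hp.pow_eq_one, one_pow]
      rw [this, Finset.sum_image]
      · split_ifs with h1
        · subst h1; simp
        · exact hp.geom_sum_eq_zero (by omega)
      · intro i hi j hj h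
        simp only [Finset.coe_range, Set.mem_Iio] at hi hj
        exact hp.pow_inj hi hj h
    · intro a _ b _ hab
      exact IsPrimitiveRoot.disjoint hab
  have := (ArithmeticFunction.sum_eq_iff_sum_mul_moebius_eq
    (f := fun d => ∑ z ∈ primitiveRoots d ℂ, z)
    (g := fun n => if n = 1 then (1 : ℂ) else 0)).1 key N hN
  rw [← this, Finset.sum_eq_single (N, 1)]
  · simp
  · rintro ⟨a, b⟩ hab hne
    rw [Nat.mem_divisorsAntidiagonal] at hab
    have : b ≠ 1 := by
      rintro rfl; apply hne; simpa using hab.1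
    simp [this]
  · intro h; exact absurd (by simp [hN.ne']) h

lemma norm_sum_prim {N : ℕ} [NeZero N] (ζ : ℂ) (hζ : IsPrimitiveRoot ζ N) :
    ‖∑ u : (ZMod N)ˣ, ζ ^ (u : ZMod N).val‖ ≤ 1 := by
  have hN : 0 < N := Nat.pos_of_ne_zero (NeZero.ne N)
  have : ∑ u : (ZMod N)ˣ, ζ ^ (u : ZMod N).val = ∑ z ∈ primitiveRoots N ℂ, z := by
    rw [← sum_units (fun x => ζ ^ x)]
    refine Finset.sum_bij (fun x _ => ζ ^ x) ?_ ?_ ?_ ?_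
    · intro x hx
      simp only [Finset.mem_filter, Finset.mem_range] at hx
      rw [mem_primitiveRoots hN]
      exact hζ.pow_of_coprime x hx.2
    · intro x hx y hy h
      simp only [Finset.mem_filter, Finset.mem_range] at hx hy
      exact hζ.pow_inj hx.1 hy.1 h
    · intro z hz
      rw [mem_primitiveRoots hN, hζ.isPrimitiveRoot_iff] at hz
      obtain ⟨i, hi, hc, h⟩ := hz
      exact ⟨i, by simpa [hi] using hc, h⟩
    · intros; rfl
  rw [this, sum_primitiveRoots N hN, Complex.norm_intCast]
  exact_mod_cast ArithmeticFunction.abs_moebius_le_one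

lemma norm_sum_units {q d : ℕ} [NeZero q] (hd : d ∣ q) (ζ : ℂ) (hζ : IsPrimitiveRoot ζ d) :
    ‖∑ u : (ZMod q)ˣ, ζ ^ (u : ZMod q).val‖ ≤ ((q / d : ℕ) : ℝ) := by
  have hq : 0 < q := Nat.pos_of_ne_zero (NeZero.ne q)
  have hd0 : 0 < d := Nat.pos_of_dvd_of_pos hd hq
  have : NeZero d := ⟨hd0.ne'⟩
  have hval : ∀ u : (ZMod q)ˣ, ((ZMod.unitsMap hd u : (ZMod d)ˣ) : ZMod d)
      = ((u : ZMod q).val : ZMod d) := by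
    intro u
    rw [ZMod.unitsMap_val, ZMod.cast_eq_val]
  have hpow : ∀ u : (ZMod q)ˣ, ζ ^ (u : ZMod q).val
      = ζ ^ ((ZMod.unitsMap hd u : (ZMod d)ˣ) : ZMod d).val := by
    intro u
    rw [hval, ZMod.val_natCast, hζ.eq_orderOf, pow_mod_orderOf]
  set K := (Finset.univ.filter (fun u : (ZMod q)ˣ => ZMod.unitsMap hd u = 1)).card with hK
  have hfib : ∀ v : (ZMod d)ˣ,
      (Finset.univ.filter (fun u : (ZMod q)ˣ => ZMod.unitsMap hd u = v)).card = K := by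
    intro v
    exact MonoidHom.card_fiber_eq_of_mem_range (ZMod.unitsMap hd)
      (ZMod.unitsMap_surjective hd v) (ZMod.unitsMap_surjective hd 1)
  have hsum : ∑ u : (ZMod q)ˣ, ζ ^ (u : ZMod q).val
      = K * ∑ v : (ZMod d)ˣ, ζ ^ (v : ZMod d).val := by
    rw [← Finset.sum_fiberwise_of_maps_to (s := Finset.univ) (t := Finset.univ)
      (g := fun u : (ZMod q)ˣ => ZMod.unitsMap hd u) (fun _ _ => Finset.mem_univ _),
      Finset.mul_sum]
    refine Finset.sum_congr rfl fun v _ => ?_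
    rw [← hfib v, ← nsmul_eq_mul, ← Finset.sum_const]
    refine Finset.sum_congr rfl fun u hu => ?_
    rw [hpow u, (Finset.mem_filter.1 hu).2]
  have hKle : K ≤ q / d := by
    rw [hK, ← Finset.card_range (q / d)]
    refine Finset.card_le_card_of_injOn (fun u => (u : ZMod q).val / d) ?_ ?_
    · intro u _
      simp only [Finset.coe_range, Set.mem_Iio]
      have := ZMod.val_lt (u : ZMod q)
      obtain ⟨k, rfl⟩ := hd
      rw [Nat.mul_div_cancel_left _ hd0]
      exact Nat.div_lt_of_lt_mul this
    · intro u hu v hv h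
      simp only [Finset.coe_filter, Finset.mem_univ, true_and, Set.mem_ofPred_eq] at hu hv h
      have h2 : ((u : ZMod q).val : ZMod d) = ((v : ZMod q).val : ZMod d) := by
        rw [← hval, ← hval, hu, hv]
      rw [ZMod.natCast_eq_natCast_iff'] at h2
      apply Units.ext
      apply ZMod.val_injective
      rw [← Nat.div_add_mod (u : ZMod q).val d, h, h2, Nat.div_add_mod]
  rw [hsum, norm_mul, Complex.norm_natCast]
  calc (K : ℝ) * _ ≤ (K : ℝ) * 1 :=
        mul_le_mul_of_nonneg_left (norm_sum_prim ζ hζ) (Nat.cast_nonneg _)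
    _ = K := mul_one _
    _ ≤ _ := by exact_mod_cast hKle

lemma kloos_eq (m n : ℤ) (c : ℕ) [NeZero c] :
    kloos m n c = ∑ u : (ZMod c)ˣ, ZMod.stdAddChar ((m : ZMod c) * (u : ZMod c)) *
      ZMod.stdAddChar ((n : ZMod c) * ((u⁻¹ : (ZMod c)ˣ) : ZMod c)) := by
  rw [kloos, sum_units (fun x => e (((m : ℝ) * (x : ℝ) +
    (n : ℝ) * ((((x : ZMod c)⁻¹).val : ℕ) : ℝ)) / (c : ℝ)))]
  refine Finset.sum_congr rfl fun u _ => ?_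
  rw [← AddChar.map_add_eq_mul, ZMod.natCast_zmod_val, ZMod.inv_coe_unit]
  have : (m : ZMod c) * (u : ZMod c) + (n : ZMod c) * ((u⁻¹ : (ZMod c)ˣ) : ZMod c)
      = ((m * ((u : ZMod c).val : ℤ) + n * ((((u⁻¹ : (ZMod c)ˣ) : ZMod c)).val : ℤ) : ℤ) : ZMod c) := by
    push_cast
    rw [ZMod.natCast_zmod_val, ZMod.natCast_zmod_val]
  rw [this, ZMod.stdAddChar_coe, e]
  congr 1
  push_cast
  ring

lemma std_pow {N : ℕ} [NeZero N] (a : ZMod N) (k : ℕ) :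
    ZMod.stdAddChar ((k : ZMod N) * a) = (ZMod.stdAddChar a : ℂ) ^ k := by
  rw [← nsmul_eq_mul, AddChar.map_nsmul_eq_pow]

lemma std_eq_one {N : ℕ} [NeZero N] (a : ZMod N) :
    (ZMod.stdAddChar a : ℂ) = 1 ↔ a = 0 := by
  rw [← (ZMod.stdAddChar (N := N)).map_zero_eq_one, ZMod.injective_stdAddChar.eq_iff]

lemma std_pow_self {N : ℕ} [NeZero N] (a : ZMod N) :
    (ZMod.stdAddChar a : ℂ) ^ N = 1 := by
  rw [← std_pow]; simp

lemma geom (w : ℂ) (n : ℕ) (h : w ^ n = 1) :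
    ∑ β ∈ Finset.range n, w ^ β = if w = 1 then (n : ℂ) else 0 := by
  split_ifs with h1
  · simp [h1]
  · rw [geom_sum_eq h1, h]; simp

lemma expand (q₁ q₂ : ℕ) [NeZero q₁] [NeZero q₂] (m₁ m₂ : ℤ) :
    ∑ β ∈ Finset.range (q₁ * q₂), kloos m₁ (β : ℤ) q₁ * kloos m₂ (β : ℤ) q₂
    = ∑ u : (ZMod q₁)ˣ, ∑ v : (ZMod q₂)ˣ,
      ZMod.stdAddChar ((m₁ : ZMod q₁) * (u : ZMod q₁)) * ZMod.stdAddChar ((m₂ : ZMod q₂) * (v : ZMod q₂)) *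
      (if ZMod.stdAddChar ((u⁻¹ : (ZMod q₁)ˣ) : ZMod q₁) *
        ZMod.stdAddChar ((v⁻¹ : (ZMod q₂)ˣ) : ZMod q₂) = (1 : ℂ)
        then ((q₁ * q₂ : ℕ) : ℂ) else 0) := by
  simp_rw [kloos_eq, Finset.sum_mul_sum]
  rw [Finset.sum_comm]
  refine Finset.sum_congr rfl fun u _ => ?_
  rw [Finset.sum_comm]
  refine Finset.sum_congr rfl fun v _ => ?_
  rw [← geom, Finset.mul_sum]
  · refine Finset.sum_congr rfl fun β _ => ?_
    rw [Int.cast_natCast, Int.cast_natCast, std_pow, std_pow, mul_pow]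
    ring
  · rw [mul_pow, pow_mul, std_pow_self, mul_comm q₁, pow_mul, std_pow_self]; simp

lemma dvd_aux {q₁ q₂ : ℕ} [NeZero q₁] [NeZero q₂] (u : (ZMod q₁)ˣ) (b : ZMod q₂)
    (h : ZMod.stdAddChar (u : ZMod q₁) * ZMod.stdAddChar b = (1 : ℂ)) : q₁ ∣ q₂ := by
  have h2 := congrArg (· ^ q₂) h
  simp only [mul_pow, std_pow_self, mul_one, one_pow] at h2
  rw [← std_pow, std_eq_one, Units.mul_left_eq_zero] at h2
  exact (ZMod.natCast_eq_zero_iff _ _).1 h2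

lemma ram (q : ℕ) [NeZero q] (m : ℤ) :
    ‖∑ u : (ZMod q)ˣ, (ZMod.stdAddChar ((m : ZMod q) * (u : ZMod q)) : ℂ)‖
      ≤ ((Int.gcd (q : ℤ) m : ℕ) : ℝ) := by
  have hq : 0 < q := Nat.pos_of_ne_zero (NeZero.ne q)
  set ζ : ℂ := ZMod.stdAddChar (m : ZMod q) with hζ
  have h1 : ∀ u : (ZMod q)ˣ, (ZMod.stdAddChar ((m : ZMod q) * (u : ZMod q)) : ℂ)
      = ζ ^ (u : ZMod q).val := by
    intro u
    rw [hζ, ← std_pow, ZMod.natCast_zmod_val, mul_comm]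
  simp_rw [h1]
  have hd : orderOf ζ ∣ q := orderOf_dvd_of_pow_eq_one (std_pow_self _)
  refine (norm_sum_units hd ζ (IsPrimitiveRoot.orderOf ζ)).trans ?_
  have hp := pow_orderOf_eq_one ζ
  rw [hζ, ← std_pow, std_eq_one, ← hζ] at hp
  have h3 : (q : ℤ) ∣ (orderOf ζ : ℤ) * m := by
    rw [← ZMod.intCast_zmod_eq_zero_iff_dvd]; push_cast; exact hp
  generalize orderOf ζ = d at *
  obtain ⟨k, rfl⟩ := hd
  have hd0 : 0 < d := Nat.pos_of_mul_pos_right hq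
  rw [Nat.mul_div_cancel_left _ hd0]
  push_cast at h3
  have h4 : (k : ℤ) ∣ m := Int.dvd_of_mul_dvd_mul_left (by exact_mod_cast hd0.ne') h3
  have h5 : (k : ℤ) ∣ (Int.gcd ((d * k : ℕ) : ℤ) m : ℤ) :=
    Int.dvd_coe_gcd (by push_cast; exact Dvd.intro_left _ rfl) h4
  have h6 : k ∣ Int.gcd ((d * k : ℕ) : ℤ) m := by exact_mod_cast h5
  have := Nat.le_of_dvd (Int.gcd_pos_of_ne_zero_left _ (by exact_mod_cast hq.ne')) h6
  exact_mod_cast this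

/-- Diagonal case of the character sum: `𝔠 = Σ_{β mod q̂₁q̂₂} S(m₁,β;q̂₁) S(m₂,β;q̂₂)`
vanishes unless `q̂₁ = q̂₂`, and if `q̂₁ = q̂₂ = q` then `|𝔠| ≤ q² (q, m₁ − m₂)`. -/
theorem stmt10 (q₁ q₂ : ℕ) (h₁ : 0 < q₁) (h₂ : 0 < q₂) (m₁ m₂ : ℤ) :
    (q₁ ≠ q₂ →
      ∑ β ∈ Finset.range (q₁ * q₂), kloos m₁ (β : ℤ) q₁ * kloos m₂ (β : ℤ) q₂ = 0) ∧
    (q₁ = q₂ →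
      ‖∑ β ∈ Finset.range (q₁ * q₂), kloos m₁ (β : ℤ) q₁ * kloos m₂ (β : ℤ) q₂‖ ≤
        (q₁ : ℝ) ^ 2 * ((Int.gcd (q₁ : ℤ) (m₁ - m₂) : ℕ) : ℝ)) := by
  have : NeZero q₁ := ⟨h₁.ne'⟩
  have : NeZero q₂ := ⟨h₂.ne'⟩
  constructor
  · intro hne
    rw [expand]
    refine Finset.sum_eq_zero fun u _ => Finset.sum_eq_zero fun v _ => ?_
    rw [if_neg, mul_zero]
    intro h
    exact hne (Nat.dvd_antisymm (dvd_aux _ _ h) (dvd_aux _ _ ((mul_comm _ _).trans h)))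
  · intro heq
    subst heq
    rw [expand]
    have : ∀ u : (ZMod q₁)ˣ, ∑ v : (ZMod q₁)ˣ,
      ZMod.stdAddChar ((m₁ : ZMod q₁) * (u : ZMod q₁)) * ZMod.stdAddChar ((m₂ : ZMod q₁) * (v : ZMod q₁)) *
      (if ZMod.stdAddChar ((u⁻¹ : (ZMod q₁)ˣ) : ZMod q₁) *
        ZMod.stdAddChar ((v⁻¹ : (ZMod q₁)ˣ) : ZMod q₁) = (1 : ℂ)
        then ((q₁ * q₁ : ℕ) : ℂ) else 0)
        = (q₁ : ℂ) ^ 2 * ZMod.stdAddChar (((m₁ - m₂ : ℤ) : ZMod q₁) * (u : ZMod q₁)) := by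
      intro u
      rw [Finset.sum_eq_single (-u)]
      · rw [← AddChar.map_add_eq_mul, ← AddChar.map_add_eq_mul, if_pos]
        · rw [mul_comm]
          congr 1
          · push_cast; ring
          · congr 1; push_cast; ring
        · rw [std_eq_one]; simp
      · intro v _ hv
        rw [if_neg, mul_zero]
        rw [← AddChar.map_add_eq_mul, std_eq_one]
        intro h
        apply hv
        have h2 : v⁻¹ = -u⁻¹ := by
          ext; push_cast; exact (neg_eq_of_add_eq_zero_right h).symm
        rw [← inv_inv v, h2]; simp
      · intro h; exact absurd (Finset.mem_univ _) h
    simp_rw [this]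
    rw [← Finset.mul_sum, norm_mul, norm_pow, Complex.norm_natCast]
    exact mul_le_mul_of_nonneg_left (ram q₁ _) (by positivity)
end

section
/- There is an absolute constant C > 0 with the following property. Let t ≥ 2 and J ≥ 1 be real numbers with 2J ≤ t, and let τ₁, τ₂ ∈ [J, 2J] with τ₁ ≠ τ₂. Define A = 3/τ₁ − 1/(t+τ₁) + 1/(τ₂−τ₁), B = −3/τ₂ + 1/(t+τ₂) + 1/(τ₂−τ₁), and D = 1/(τ₁−τ₂). Then | A·B − D² + 6/(τ₁τ₂) | ≤ C/(J·t). -/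
/-- Hessian determinant computation for the two-variable phase: for `t ≥ 2`, `1 ≤ J`,
`2J ≤ t` and `τ₁ ≠ τ₂` in `[J, 2J]`, with
`A = 3/τ₁ − 1/(t+τ₁) + 1/(τ₂−τ₁)`, `B = −3/τ₂ + 1/(t+τ₂) + 1/(τ₂−τ₁)`, `D = 1/(τ₁−τ₂)`,
one has `|A·B − D² + 6/(τ₁τ₂)| ≤ C/(J·t)` for an absolute constant `C`. -/
theorem stmt15 : ∃ C > 0, ∀ t J τ₁ τ₂ : ℝ, 2 ≤ t → 1 ≤ J → 2 * J ≤ t →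
    τ₁ ∈ Set.Icc J (2 * J) → τ₂ ∈ Set.Icc J (2 * J) → τ₁ ≠ τ₂ →
    |(3 / τ₁ - 1 / (t + τ₁) + 1 / (τ₂ - τ₁)) *
        (-3 / τ₂ + 1 / (t + τ₂) + 1 / (τ₂ - τ₁)) -
      (1 / (τ₁ - τ₂)) ^ 2 + 6 / (τ₁ * τ₂)| ≤ C / (J * t) := by
  refine ⟨6, by norm_num, ?_⟩
  intro t J a b ht hJ hJt ha hb hab
  obtain ⟨ha1, ha2⟩ := ha
  obtain ⟨hb1, hb2⟩ := hb
  have hJ0 : 0 < J := by linarith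
  have ht0 : 0 < t := by linarith
  have ha0 : 0 < a := by linarith
  have hb0 : 0 < b := by linarith
  have hta : 0 < t + a := by linarith
  have htb : 0 < t + b := by linarith
  have h1 : b - a ≠ 0 := sub_ne_zero.mpr (Ne.symm hab)
  have key : (3 / a - 1 / (t + a) + 1 / (b - a)) * (-3 / b + 1 / (t + b) + 1 / (b - a)) -
      (1 / (a - b)) ^ 2 + 6 / (a * b) =
      3 * (1 / (a * (t + b))) + 3 * (1 / (b * (t + a))) - 2 * (1 / ((t + a) * (t + b))) := by
    have h2 : a - b = -(b - a) := by ring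
    rw [h2]
    field_simp
    ring
  rw [key]
  have e1 : 1 / (a * (t + b)) ≤ 1 / (J * t) := by
    apply one_div_le_one_div_of_le (by positivity)
    apply mul_le_mul <;> linarith
  have e2 : 1 / (b * (t + a)) ≤ 1 / (J * t) := by
    apply one_div_le_one_div_of_le (by positivity)
    apply mul_le_mul <;> linarith
  have e3 : 1 / ((t + a) * (t + b)) ≤ 1 / (J * t) := by
    apply one_div_le_one_div_of_le (by positivity)
    apply mul_le_mul <;> linarith
  have p1 : 0 ≤ 1 / (a * (t + b)) := by positivity
  have p2 : 0 ≤ 1 / (b * (t + a)) := by positivity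
  have p3 : 0 ≤ 1 / ((t + a) * (t + b)) := by positivity
  have h6 : 6 / (J * t) = 6 * (1 / (J * t)) := by ring
  rw [h6, abs_le]
  constructor <;> linarith
end
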